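/- A BIBS system is IOS if and only if it admits an IOS-Lyapunov function. -/

import Mathlib

open MeasureTheory Set Filter Topology
open scoped ENNReal NNReal

noncomputable section

/-- A function of class `K`: continuous, strictly increasing on `[0,∞)` and vanishing at `0`. -/
def IsClassK (α : ℝ → ℝ) : Prop :=
  ContinuousOn α (Ici 0) ∧ StrictMonoOn α (Ici 0) ∧ α 0 = 0

/-- A function of class `K∞`: class `K` and unbounded. -/
def IsClassKInfty (α : ℝ → ℝ) : Prop :=
  IsClassK α ∧ Tendsto α atTop atTop

/-- A function of class `KL`. -/
def IsClassKL (β : ℝ → ℝ → ℝ) : Prop :=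
  (∀ t ∈ Ici (0:ℝ), IsClassK fun s => β s t) ∧
  ∀ s ∈ Ici (0:ℝ), AntitoneOn (fun t => β s t) (Ici 0) ∧
    Tendsto (fun t => β s t) atTop (𝓝 0)

/-- Admissible inputs: measurable and locally essentially bounded on `[0,∞)`. -/
def IsInput {m : ℕ} (u : ℝ → EuclideanSpace ℝ (Fin m)) : Prop :=
  Measurable u ∧ ∀ T > (0:ℝ), ∃ C : ℝ, ∀ᵐ t ∂(volume.restrict (Icc 0 T)), ‖u t‖ ≤ C

/-- The essential supremum norm of an input over `[0,∞)`, as an extended nonnegative real. -/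
def uNormE {m : ℕ} (u : ℝ → EuclideanSpace ℝ (Fin m)) : ℝ≥0∞ :=
  essSup (fun t => (‖u t‖₊ : ℝ≥0∞)) (volume.restrict (Ici 0))

/-- An input which is (globally) essentially bounded on `[0,∞)`. -/
def BddInput {m : ℕ} (u : ℝ → EuclideanSpace ℝ (Fin m)) : Prop := uNormE u ≠ ⊤

/-- The essential supremum norm `‖u‖` of an input, as a real number. -/
def uNorm {m : ℕ} (u : ℝ → EuclideanSpace ℝ (Fin m)) : ℝ := (uNormE u).toReal

/-- `x` is the solution map of the forward-complete system `ẋ = f(x,u)`: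
for every initial state `ξ` and admissible input `u`, `t ↦ x t ξ u` solves the corresponding
integral equation on all of `[0,∞)`. -/
def IsSolutionMap {n m : ℕ}
    (f : EuclideanSpace ℝ (Fin n) → EuclideanSpace ℝ (Fin m) → EuclideanSpace ℝ (Fin n))
    (x : ℝ → EuclideanSpace ℝ (Fin n) → (ℝ → EuclideanSpace ℝ (Fin m)) →
      EuclideanSpace ℝ (Fin n)) : Prop :=
  ∀ ξ u, IsInput u → ∀ t ∈ Ici (0:ℝ),
    x t ξ u = ξ + ∫ s in (0:ℝ)..t, f (x s ξ u) (u s)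

/-- The system is bounded-input bounded-state (BIBS): it is forward complete (encoded by the
solution-map property) and trajectories are bounded in terms of a class-`K` function of the
initial state and of the input norm. -/
def IsBIBS {n m : ℕ}
    (f : EuclideanSpace ℝ (Fin n) → EuclideanSpace ℝ (Fin m) → EuclideanSpace ℝ (Fin n))
    (x : ℝ → EuclideanSpace ℝ (Fin n) → (ℝ → EuclideanSpace ℝ (Fin m)) →
      EuclideanSpace ℝ (Fin n)) : Prop :=
  IsSolutionMap f x ∧ ∃ σ : ℝ → ℝ, IsClassK σ ∧ ∀ ξ u, IsInput u → BddInput u →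
    ∀ t ∈ Ici (0:ℝ), ‖x t ξ u‖ ≤ max (σ ‖ξ‖) (σ (uNorm u))

/-- Input-to-output stability (IOS). -/
def IsIOS {n m p : ℕ}
    (h : EuclideanSpace ℝ (Fin n) → EuclideanSpace ℝ (Fin p))
    (x : ℝ → EuclideanSpace ℝ (Fin n) → (ℝ → EuclideanSpace ℝ (Fin m)) →
      EuclideanSpace ℝ (Fin n)) : Prop :=
  ∃ β γ, IsClassKL β ∧ IsClassK γ ∧ ∀ ξ u, IsInput u → BddInput u →
    ∀ t ∈ Ici (0:ℝ), ‖h (x t ξ u)‖ ≤ max (β ‖ξ‖ t) (γ (uNorm u))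

/-- An IOS-Lyapunov function for the system `ẋ = f(x,u)`, `y = h(x)`. -/
def IsIOSLyapunov {n m p : ℕ}
    (f : EuclideanSpace ℝ (Fin n) → EuclideanSpace ℝ (Fin m) → EuclideanSpace ℝ (Fin n))
    (h : EuclideanSpace ℝ (Fin n) → EuclideanSpace ℝ (Fin p))
    (V : EuclideanSpace ℝ (Fin n) → ℝ) : Prop :=
  ContDiff ℝ (⊤:ℕ∞) V ∧ (∀ ξ, 0 ≤ V ξ) ∧
  (∃ α₁ α₂ : ℝ → ℝ, IsClassKInfty α₁ ∧ IsClassKInfty α₂ ∧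
    ∀ ξ, α₁ ‖h ξ‖ ≤ V ξ ∧ V ξ ≤ α₂ ‖ξ‖) ∧
  ∃ χ : ℝ → ℝ, IsClassK χ ∧ ∃ α₃ : ℝ → ℝ → ℝ,
    (∀ r ∈ Ici (0:ℝ), IsClassK fun s => α₃ s r) ∧
    (∀ s ∈ Ici (0:ℝ), AntitoneOn (fun r => α₃ s r) (Ici 0)) ∧
    ∀ ξ μ, χ ‖μ‖ ≤ V ξ → fderiv ℝ V ξ (f ξ μ) ≤ -α₃ (V ξ) ‖ξ‖

/-! ### Comparison functions -/

/-- A class-`K` minorant of a nonnegative monotone function. -/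
def classKMinorant (m : ℝ → ℝ) (s : ℝ) : ℝ := (∫ τ in (0:ℝ)..s, m τ) / (1 + s)

lemma isClassK_classKMinorant {m : ℝ → ℝ} (hm : Monotone m)
    (hpos : ∀ s, 0 < s → 0 < m s) : IsClassK (classKMinorant m) := by
  have hi : ∀ a b, IntervalIntegrable m volume a b := fun a b => hm.intervalIntegrable
  refine ⟨?_, ?_, by simp [classKMinorant]⟩
  · refine ContinuousOn.div (intervalIntegral.continuous_primitive hi 0).continuousOn
      (by fun_prop) ?_
    intro s hs
    have : (0:ℝ) ≤ s := hs
    positivity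
  · intro s hs t ht hst
    have hs' : (0:ℝ) ≤ s := hs
    have ht' : (0:ℝ) ≤ t := ht
    simp only [classKMinorant]
    rw [div_lt_div_iff₀ (by positivity) (by positivity),
      ← intervalIntegral.integral_add_adjacent_intervals (hi 0 s) (hi s t)]
    have hJ : 0 < ∫ τ in s..t, m τ :=
      intervalIntegral.intervalIntegral_pos_of_pos_on (hi s t)
        (fun r hr => hpos r (hs'.trans_lt hr.1)) hst
    have hJ' : (t - s) * m s ≤ ∫ τ in s..t, m τ := by
      have := intervalIntegral.integral_mono_on hst.le (intervalIntegrable_const (c := m s))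
        (hi s t) (fun r hr => hm hr.1)
      simpa using this
    have hI : (∫ τ in (0:ℝ)..s, m τ) ≤ s * m s := by
      have := intervalIntegral.integral_mono_on hs' (hi 0 s)
        (intervalIntegrable_const (c := m s)) (fun r hr => hm hr.2)
      simpa using this
    nlinarith [mul_le_mul_of_nonneg_left hI (sub_nonneg.2 hst.le),
      mul_le_mul_of_nonneg_left hJ' hs']

lemma classKMinorant_le {m : ℝ → ℝ} (hm : Monotone m) (h0 : 0 ≤ m 0) {s : ℝ} (hs : 0 ≤ s) :
    classKMinorant m s ≤ m s := by
  have hI : (∫ τ in (0:ℝ)..s, m τ) ≤ s * m s := by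
    have := intervalIntegral.integral_mono_on hs (hm.intervalIntegrable (μ := volume))
      (intervalIntegrable_const (c := m s)) (fun r hr => hm hr.2)
    simpa using this
  rw [classKMinorant, div_le_iff₀ (by positivity)]
  nlinarith [h0.trans (hm hs)]

lemma classKMinorant_mono {m m' : ℝ → ℝ} (hm : Monotone m) (hm' : Monotone m')
    (h : ∀ s, m s ≤ m' s) {s : ℝ} (hs : 0 ≤ s) : classKMinorant m s ≤ classKMinorant m' s := by
  unfold classKMinorant
  gcongr
  exact intervalIntegral.integral_mono_on hs hm.intervalIntegrable hm'.intervalIntegrable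
    fun r _ => h r

lemma tendsto_classKMinorant {m : ℝ → ℝ} (hm : Monotone m) (h0 : 0 ≤ m 0)
    (htop : Tendsto m atTop atTop) : Tendsto (classKMinorant m) atTop atTop := by
  have hi : ∀ a b, IntervalIntegrable m volume a b := fun a b => hm.intervalIntegrable
  have h4 : Tendsto (fun s : ℝ => m (s / 2) / 4) atTop atTop :=
    (htop.comp (tendsto_id.atTop_div_const (by norm_num))).atTop_div_const (by norm_num)
  refine tendsto_atTop_mono' _ ?_ h4
  filter_upwards [eventually_ge_atTop (1:ℝ)] with s hs
  have hs0 : 0 ≤ s := by linarith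
  have hJ : (s - s / 2) * m (s / 2) ≤ ∫ τ in (s / 2)..s, m τ := by
    have := intervalIntegral.integral_mono_on (by linarith)
      (intervalIntegrable_const (c := m (s / 2))) (hi (s / 2) s) (fun r hr => hm hr.1)
    simpa using this
  have hI : 0 ≤ ∫ τ in (0:ℝ)..(s / 2), m τ :=
    intervalIntegral.integral_nonneg (by linarith) fun r hr => h0.trans (hm hr.1)
  have hadd := intervalIntegral.integral_add_adjacent_intervals (hi 0 (s / 2)) (hi (s / 2) s)
  have hms : 0 ≤ m (s / 2) := h0.trans (hm (by linarith))
  rw [classKMinorant, le_div_iff₀ (by positivity), ← hadd]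
  nlinarith

lemma exists_isClassKL_ge {φ : ℝ → ℝ → ℝ} (hmono : ∀ t, Monotone fun s => φ s t)
    (hanti : ∀ s, AntitoneOn (φ s) (Ici 0)) (hnn : ∀ s t, 0 ≤ φ s t)
    (hlim : ∀ s, Tendsto (φ s) atTop (𝓝 0))
    (hzero : Tendsto (fun s => φ s 0) (𝓝[>] 0) (𝓝 0)) :
    ∃ β, IsClassKL β ∧ ∀ s, 0 ≤ s → ∀ t, 0 ≤ t → φ s t ≤ β s t := by
  have hi : ∀ t a b, IntervalIntegrable (fun s => φ s t) volume a b :=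
    fun t a b => (hmono t).intervalIntegrable
  have hi' : ∀ s t, 0 ≤ s → IntervalIntegrable (fun τ => φ (s * τ) t) volume 1 2 :=
    fun s t hs => Monotone.intervalIntegrable
      fun a b hab => hmono t (mul_le_mul_of_nonneg_left hab hs)
  have hle : ∀ s t, 0 ≤ s → (∫ τ in (1:ℝ)..2, φ (s * τ) t) ≤ φ (s * 2) t := by
    intro s t hs
    have := intervalIntegral.integral_mono_on (by norm_num) (hi' s t hs)
      (intervalIntegrable_const (c := φ (s * 2) t))
      (fun r hr => hmono t (mul_le_mul_of_nonneg_left hr.2 hs))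
    norm_num at this
    exact this
  have hge : ∀ s t, 0 ≤ s → φ s t ≤ ∫ τ in (1:ℝ)..2, φ (s * τ) t := by
    intro s t hs
    have := intervalIntegral.integral_mono_on (by norm_num)
      (intervalIntegrable_const (c := φ s t)) (hi' s t hs)
      (fun r hr => hmono t (le_mul_of_one_le_right hs hr.1))
    norm_num at this
    exact this
  have hnnI : ∀ s t, 0 ≤ ∫ τ in (1:ℝ)..2, φ (s * τ) t := fun s t =>
    intervalIntegral.integral_nonneg (by norm_num) fun _ _ => hnn _ _
  have hφ0 : ∀ t, 0 ≤ t → φ 0 t = 0 := by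
    intro t ht
    refine le_antisymm (ge_of_tendsto hzero ?_) (hnn 0 t)
    filter_upwards [self_mem_nhdsWithin] with s hs
    exact (hanti 0 self_mem_Ici ht ht).trans (hmono 0 (le_of_lt hs))
  have hcont : ∀ t, 0 ≤ t →
      ContinuousOn (fun s => ∫ τ in (1:ℝ)..2, φ (s * τ) t) (Ici 0) := by
    intro t ht s hs
    rcases eq_or_lt_of_le (show (0:ℝ) ≤ s from hs) with rfl | hs0
    · have h2 : Tendsto (fun s : ℝ => φ (s * 2) t) (𝓝[≥] 0) (𝓝 0) := by
        rw [← Ioi_insert, nhdsWithin_insert, tendsto_sup]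
        constructor
        · rw [tendsto_pure_left]
          intro s hs
          simpa [hφ0 t ht] using mem_of_mem_nhds hs
        · have hd : Tendsto (fun s : ℝ => s * 2) (𝓝[>] 0) (𝓝[>] 0) := by
            refine tendsto_nhdsWithin_of_tendsto_nhds_of_eventually_within _ ?_ ?_
            · exact tendsto_nhdsWithin_of_tendsto_nhds
                (by simpa using (continuous_mul_const (2:ℝ)).tendsto 0)
            · filter_upwards [self_mem_nhdsWithin] with s hs
              exact mul_pos (show (0:ℝ) < s from hs) two_pos
          refine squeeze_zero (fun s => hnn _ _) (fun s => ?_) (hzero.comp hd)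
          exact hanti _ self_mem_Ici ht ht
      have : (∫ τ in (1:ℝ)..2, φ (0 * τ) t) = 0 := by simp [hφ0 t ht]
      rw [ContinuousWithinAt, this]
      refine squeeze_zero' (Eventually.of_forall fun s => hnnI s t) ?_ h2
      filter_upwards [self_mem_nhdsWithin] with s hs
      exact hle s t hs
    · have hp := intervalIntegral.continuous_primitive (hi t) 0
      have hc : ContinuousAt (fun s : ℝ => s⁻¹ *
          ((∫ r in (0:ℝ)..(s * 2), φ r t) - ∫ r in (0:ℝ)..(s * 1), φ r t)) s := by
        refine (continuousAt_inv₀ hs0.ne').mul (ContinuousAt.sub ?_ ?_)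
        · exact (hp.comp (continuous_mul_const 2)).continuousAt
        · exact (hp.comp (continuous_mul_const 1)).continuousAt
      refine (hc.congr ?_).continuousWithinAt
      filter_upwards [lt_mem_nhds hs0] with r hr
      rw [intervalIntegral.integral_interval_sub_left (hi t _ _) (hi t _ _),
        intervalIntegral.integral_comp_mul_left (fun q => φ q t) hr.ne', smul_eq_mul]
  refine ⟨fun s t => (∫ τ in (1:ℝ)..2, φ (s * τ) t) + s * Real.exp (-t), ⟨?_, ?_⟩, ?_⟩
  · intro t ht
    refine ⟨(hcont t ht).add (by fun_prop), ?_, ?_⟩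
    · intro a ha b hb hab
      refine add_lt_add_of_le_of_lt ?_ (mul_lt_mul_of_pos_right hab (Real.exp_pos _))
      refine intervalIntegral.integral_mono_on (by norm_num) (hi' a t ha) (hi' b t hb) ?_
      intro r hr
      exact hmono t (mul_le_mul_of_nonneg_right hab.le (by linarith [hr.1]))
    · simp [hφ0 t ht]
  · intro s hs
    have hs' : (0:ℝ) ≤ s := hs
    constructor
    · intro a ha b hb hab
      refine add_le_add ?_ (mul_le_mul_of_nonneg_left (Real.exp_le_exp.2 (by linarith)) hs')
      exact intervalIntegral.integral_mono_on (by norm_num) (hi' s b hs') (hi' s a hs')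
        fun r _ => hanti _ ha hb hab
    · have h1 : Tendsto (fun t => ∫ τ in (1:ℝ)..2, φ (s * τ) t) atTop (𝓝 0) :=
        squeeze_zero (fun t => hnnI s t) (fun t => hle s t hs') (hlim (s * 2))
      have h2 : Tendsto (fun t : ℝ => s * Real.exp (-t)) atTop (𝓝 0) := by
        simpa using Real.tendsto_exp_neg_atTop_nhds_zero.const_mul s
      simpa using h1.add h2
  · intro s hs t _
    have := hge s t hs
    have : 0 ≤ s * Real.exp (-t) := by positivity
    linarith [hge s t hs]

lemma exists_isClassK_ge {M : ℝ → ℝ} (hmono : Monotone M) (hnn : ∀ s, 0 ≤ M s)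
    (hzero : Tendsto M (𝓝[>] 0) (𝓝 0)) : ∃ α, IsClassK α ∧ ∀ s, 0 ≤ s → M s ≤ α s := by
  obtain ⟨β, hβ, hle⟩ := exists_isClassKL_ge (φ := fun s t => M s * Real.exp (-t))
    (fun t a b hab => mul_le_mul_of_nonneg_right (hmono hab) (Real.exp_pos _).le)
    (fun s a _ b _ hab => mul_le_mul_of_nonneg_left (Real.exp_le_exp.2 (by linarith)) (hnn s))
    (fun s t => mul_nonneg (hnn s) (Real.exp_pos _).le)
    (fun s => by simpa using Real.tendsto_exp_neg_atTop_nhds_zero.const_mul (M s))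
    (by simpa using hzero)
  exact ⟨_, hβ.1 0 self_mem_Ici, fun s hs => by simpa using hle s hs 0 le_rfl⟩

lemma IsClassK.monotoneOn {α : ℝ → ℝ} (h : IsClassK α) : MonotoneOn α (Ici 0) :=
  h.2.1.monotoneOn

lemma IsClassK.nonneg {α : ℝ → ℝ} (h : IsClassK α) {s : ℝ} (hs : 0 ≤ s) : 0 ≤ α s := by
  have := h.monotoneOn self_mem_Ici hs hs
  rwa [h.2.2] at this

lemma IsClassK.pos {α : ℝ → ℝ} (h : IsClassK α) {s : ℝ} (hs : 0 < s) : 0 < α s := by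
  have := h.2.1 self_mem_Ici hs.le hs
  rwa [h.2.2] at this

lemma IsClassK.tendsto_zero {α : ℝ → ℝ} (h : IsClassK α) : Tendsto α (𝓝[>] 0) (𝓝 0) := by
  have := (h.1 0 self_mem_Ici).mono Ioi_subset_Ici_self
  rwa [ContinuousWithinAt, h.2.2] at this

/-! ### Smooth series with small coefficients -/

lemma exists_bound_iteratedFDeriv {E : Type*} [NormedAddCommGroup E] [NormedSpace ℝ E]
    {g : E → ℝ} (hg : ContDiff ℝ (⊤:ℕ∞) g) (hc : HasCompactSupport g) (i : ℕ) :
    ∃ C, 0 ≤ C ∧ ∀ ξ, ‖iteratedFDeriv ℝ i g ξ‖ ≤ C := by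
  have h1 : Continuous (iteratedFDeriv ℝ i g) :=
    hg.continuous_iteratedFDeriv (by exact_mod_cast le_top)
  obtain ⟨C, hC⟩ := (hc.iteratedFDeriv (𝕜 := ℝ) i).exists_bound_of_continuous h1
  exact ⟨C, (norm_nonneg _).trans (hC 0), hC⟩

section SmoothSeries

variable {E : Type*} [NormedAddCommGroup E] [NormedSpace ℝ E] [FiniteDimensional ℝ E]

/-- A smooth function on `E` equal to `1` on the ball of radius `j + 1`, supported in the ball of
radius `j + 2`. -/
def natBump (E : Type*) [NormedAddCommGroup E] [NormedSpace ℝ E] [FiniteDimensional ℝ E] (j : ℕ) :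
    ContDiffBump (0 : E) :=
  ⟨j + 1, j + 2, by positivity, by linarith⟩

lemma natBump_eq_one {j : ℕ} {ξ : E} (h : ‖ξ‖ ≤ j + 1) : natBump E j ξ = 1 :=
  (natBump E j).one_of_mem_closedBall (by simpa [natBump] using h)

lemma natBump_eq_zero {j : ℕ} {ξ : E} (h : (j:ℝ) + 2 ≤ ‖ξ‖) : natBump E j ξ = 0 :=
  (natBump E j).zero_of_le_dist (by simpa [natBump] using h)

lemma exists_coeff_contDiff_tsum {g : ℕ → E → ℝ} (hg : ∀ k, ContDiff ℝ (⊤:ℕ∞) (g k)) :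
    ∃ d : ℕ → ℝ, (∀ k, 0 < d k) ∧ ∀ c : ℕ → ℝ, (∀ k, 0 ≤ c k ∧ c k ≤ d k) →
      ContDiff ℝ (⊤:ℕ∞) (fun ξ => ∑' k, c k * g k ξ) ∧
      ∀ ξ, (Summable fun k => c k * g k ξ) ∧ (Summable fun k => c k • fderiv ℝ (g k) ξ) ∧
        fderiv ℝ (fun ξ => ∑' k, c k * g k ξ) ξ = ∑' k, c k • fderiv ℝ (g k) ξ := by
  have hG : ∀ j k, ContDiff ℝ (⊤:ℕ∞) (fun ξ => natBump E j ξ * g k ξ) := fun j k =>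
    (natBump E j).contDiff.mul (hg k)
  have hb : ∀ i j k : ℕ, ∃ C, 0 ≤ C ∧
      ∀ ξ, ‖iteratedFDeriv ℝ i (fun ξ => natBump E j ξ * g k ξ) ξ‖ ≤ C := fun i j k =>
    exists_bound_iteratedFDeriv (hG j k) ((natBump E j).hasCompactSupport.mul_right) i
  choose C hC0 hC using hb
  set D : ℕ → ℝ := fun k =>
    1 + ∑ q ∈ Finset.range (k + 1) ×ˢ Finset.range (k + 1), C q.1 q.2 k with hD
  have hsum0 : ∀ k, 0 ≤ ∑ q ∈ Finset.range (k + 1) ×ˢ Finset.range (k + 1), C q.1 q.2 k :=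
    fun k => Finset.sum_nonneg fun q _ => hC0 _ _ _
  have hDpos : ∀ k, 0 < D k := fun k => by have := hsum0 k; simp only [hD]; linarith
  refine ⟨fun k => (1 / 2) ^ k / D k, fun k => div_pos (by positivity) (hDpos k), ?_⟩
  intro c hc
  have hv : ∀ i j, Summable fun k => c k * C i j k := by
    intro i j
    refine Summable.of_norm_bounded_eventually_nat summable_geometric_two ?_
    filter_upwards [eventually_ge_atTop (max i j)] with k hk
    rw [Real.norm_of_nonneg (mul_nonneg (hc k).1 (hC0 _ _ _))]
    have hle : C i j k ≤ D k := by
      have : C i j k ≤ ∑ q ∈ Finset.range (k + 1) ×ˢ Finset.range (k + 1), C q.1 q.2 k :=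
        Finset.single_le_sum (f := fun q : ℕ × ℕ => C q.1 q.2 k) (fun q _ => hC0 _ _ _)
          (a := (i, j)) (by simp; omega)
      simp only [hD]; linarith
    calc c k * C i j k ≤ (1 / 2) ^ k / D k * D k :=
          mul_le_mul (hc k).2 hle (hC0 _ _ _) (div_pos (by positivity) (hDpos k)).le
      _ = (1 / 2) ^ k := div_mul_cancel₀ _ (hDpos k).ne'
  have hit : ∀ i j k ξ,
      ‖iteratedFDeriv ℝ i (fun ξ => c k * (natBump E j ξ * g k ξ)) ξ‖ ≤ c k * C i j k := by
    intro i j k ξ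
    have : iteratedFDeriv ℝ i (fun ξ => c k * (natBump E j ξ * g k ξ)) ξ =
        c k • iteratedFDeriv ℝ i (fun ξ => natBump E j ξ * g k ξ) ξ :=
      iteratedFDeriv_const_smul_apply (a := c k)
        (((hG j k).of_le (by exact_mod_cast le_top)).contDiffAt)
    rw [this, norm_smul, Real.norm_of_nonneg (hc k).1]
    exact mul_le_mul_of_nonneg_left (hC i j k ξ) (hc k).1
  have hsm : ∀ j, ContDiff ℝ (⊤:ℕ∞) (fun ξ => ∑' k, c k * (natBump E j ξ * g k ξ)) := fun j =>
    contDiff_tsum (fun k => contDiff_const.mul (hG j k)) (fun i _ => hv i j)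
      (fun i k ξ _ => hit i j k ξ)
  have hloc : ∀ ξ : E, ∃ j : ℕ, ∀ᶠ ζ in 𝓝 ξ, natBump E j ζ = 1 := by
    intro ξ
    obtain ⟨j, hj⟩ := exists_nat_gt ‖ξ‖
    refine ⟨j, ?_⟩
    filter_upwards [(continuous_norm.tendsto ξ).eventually (gt_mem_nhds hj)] with ζ hζ
    exact natBump_eq_one (by linarith)
  have heq : ∀ ξ : E, ∀ j : ℕ, (∀ᶠ ζ in 𝓝 ξ, natBump E j ζ = 1) →
      (fun ξ => ∑' k, c k * g k ξ) =ᶠ[𝓝 ξ] fun ξ => ∑' k, c k * (natBump E j ξ * g k ξ) := by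
    intro ξ j hj
    filter_upwards [hj] with ζ hζ
    simp [hζ]
  refine ⟨?_, fun ξ => ?_⟩
  · rw [contDiff_iff_contDiffAt]
    intro ξ
    obtain ⟨j, hj⟩ := hloc ξ
    exact (hsm j).contDiffAt.congr_of_eventuallyEq (heq ξ j hj)
  · obtain ⟨j, hj⟩ := hloc ξ
    have h1 : natBump E j ξ = 1 := hj.self_of_nhds
    have hfd : ∀ k, fderiv ℝ (fun ξ => c k * (natBump E j ξ * g k ξ)) ξ =
        c k • fderiv ℝ (g k) ξ := by
      intro k
      have : (fun ξ => c k * (natBump E j ξ * g k ξ)) =ᶠ[𝓝 ξ] fun ξ => c k * g k ξ := by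
        filter_upwards [hj] with ζ hζ
        simp [hζ]
      rw [this.fderiv_eq, fderiv_const_mul]
      exact (hg k).differentiable (by simp) ξ
    have hs0 : ∀ ξ, Summable fun k => c k * (natBump E j ξ * g k ξ) := by
      intro ξ
      refine Summable.of_norm_bounded (hv 0 j) fun k => ?_
      simpa [norm_iteratedFDeriv_zero] using hit 0 j k ξ
    have hf1 : ∀ k ξ, ‖fderiv ℝ (fun ξ => c k * (natBump E j ξ * g k ξ)) ξ‖ ≤ c k * C 1 j k := by
      intro k ξ
      rw [← norm_iteratedFDeriv_one]
      exact hit 1 j k ξ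
    refine ⟨by simpa [h1] using hs0 ξ, ?_, ?_⟩
    · refine Summable.of_norm_bounded (hv 1 j) fun k => ?_
      rw [← hfd]
      exact hf1 k ξ
    · rw [(heq ξ j hj).fderiv_eq, fderiv_tsum_apply (hv 1 j)
        (fun k => (contDiff_const.mul (hG j k)).differentiable (by simp)) hf1 (hs0 0)]
      simp only [hfd]

end SmoothSeries

/-! ### Mollification with variable radius -/

lemma exists_contDiff_pos_small {E : Type*} [NormedAddCommGroup E] [NormedSpace ℝ E]
    [FiniteDimensional ℝ E] {e : ℕ → ℝ} (he : ∀ k, 0 < e k) :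
    ∃ ε : E → ℝ, ContDiff ℝ (⊤:ℕ∞) ε ∧ (∀ ξ, 0 < ε ξ) ∧
      ∀ ξ, ε ξ ≤ e ⌊‖ξ‖⌋₊ ∧ ‖fderiv ℝ ε ξ‖ ≤ e ⌊‖ξ‖⌋₊ := by
  have hsm : ∀ k, ContDiff ℝ (⊤:ℕ∞) (fun ξ => natBump E k ξ) := fun k => (natBump E k).contDiff
  obtain ⟨d, hd, hc⟩ := exists_coeff_contDiff_tsum hsm
  choose C hC0 hC using fun k =>
    exists_bound_iteratedFDeriv (hsm k) (natBump E k).hasCompactSupport 1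
  have hinf : ∀ k, 0 < (Finset.range (k + 2)).inf' (by simp) e := fun k =>
    (Finset.lt_inf'_iff _).2 fun i _ => he i
  set a : ℕ → ℝ := fun k => (1 / 2) ^ (k + 1) * (Finset.range (k + 2)).inf' (by simp) e with ha
  have hapos : ∀ k, 0 < a k := fun k => mul_pos (by positivity) (hinf k)
  set c : ℕ → ℝ := fun k => min (d k) (a k / (1 + C k)) with hcdef
  have hcpos : ∀ k, 0 < c k := fun k =>
    lt_min (hd k) (div_pos (hapos k) (by have := hC0 k; positivity))
  have hcC : ∀ k, c k * (1 + C k) ≤ a k := fun k =>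
    (le_div_iff₀ (by have := hC0 k; positivity)).1 (min_le_right _ _)
  obtain ⟨hcd, hs⟩ := hc c fun k => ⟨(hcpos k).le, min_le_left _ _⟩
  have hale : ∀ (ξ : E) k, natBump E k ξ ≠ 0 → a k ≤ (1 / 2) ^ (k + 1) * e ⌊‖ξ‖⌋₊ := by
    intro ξ k hk
    have hlt : ‖ξ‖ < k + 2 := by
      by_contra h
      exact hk (natBump_eq_zero (not_lt.1 h))
    have hfl : ⌊‖ξ‖⌋₊ < k + 2 := (Nat.floor_lt (norm_nonneg _)).2 (by exact_mod_cast hlt)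
    exact mul_le_mul_of_nonneg_left (Finset.inf'_le _ (by simpa using hfl)) (by positivity)
  have hgeo : HasSum (fun k : ℕ => ((1:ℝ) / 2) ^ (k + 1)) 1 := by
    have := hasSum_geometric_two.mul_left (1 / 2 : ℝ)
    norm_num at this
    simpa [pow_succ, mul_comm] using this
  have hgeo' : ∀ r : ℝ, HasSum (fun k : ℕ => ((1:ℝ) / 2) ^ (k + 1) * r) r := fun r => by
    simpa using hgeo.mul_right r
  refine ⟨fun ξ => ∑' k, c k * natBump E k ξ, hcd, fun ξ => ?_, fun ξ => ⟨?_, ?_⟩⟩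
  · obtain ⟨j, hj⟩ := exists_nat_gt ‖ξ‖
    refine (hs ξ).1.tsum_pos (fun k => mul_nonneg (hcpos k).le (natBump E k).nonneg) j ?_
    rw [natBump_eq_one (by linarith), mul_one]
    exact hcpos j
  · refine (hs ξ).1.tsum_le_of_sum_le fun s => ?_
    refine (Finset.sum_le_sum fun k _ => ?_).trans
      (sum_le_hasSum s (fun k _ => mul_nonneg (by positivity) (he _).le) (hgeo' (e ⌊‖ξ‖⌋₊)))
    by_cases hk : natBump E k ξ = 0
    · rw [hk, mul_zero]
      exact mul_nonneg (by positivity) (he _).le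
    · refine le_trans ?_ (hale ξ k hk)
      refine le_trans ?_ (hcC k)
      exact mul_le_mul_of_nonneg_left ((natBump E k).le_one.trans (by linarith [hC0 k]))
        (hcpos k).le
  · rw [(hs ξ).2.2]
    refine tsum_of_norm_bounded (hgeo' (e ⌊‖ξ‖⌋₊)) fun k => ?_
    rw [norm_smul, Real.norm_of_nonneg (hcpos k).le]
    by_cases hk : natBump E k ξ = 0
    · have hmin : IsLocalMin (fun ξ => natBump E k ξ) ξ :=
        Eventually.of_forall fun ζ => by
          change natBump E k ξ ≤ _
          rw [hk]; exact (natBump E k).nonneg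
      rw [hmin.fderiv_eq_zero, norm_zero, mul_zero]
      exact mul_nonneg (by positivity) (he _).le
    · refine le_trans ?_ (hale ξ k hk)
      refine le_trans ?_ (hcC k)
      refine mul_le_mul_of_nonneg_left ?_ (hcpos k).le
      rw [← norm_iteratedFDeriv_one]
      linarith [hC k ξ]

section Mollify

variable {n : ℕ}

/-- A fixed bump function of total mass one supported in the unit ball. -/
def unitBump (n : ℕ) : EuclideanSpace ℝ (Fin n) → ℝ :=
  (⟨1 / 2, 1, by norm_num, by norm_num⟩ : ContDiffBump (0 : EuclideanSpace ℝ (Fin n))).normed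
    volume

lemma unitBump_contDiff : ContDiff ℝ (⊤:ℕ∞) (unitBump n) := ContDiffBump.contDiff_normed _

lemma unitBump_nonneg (z : EuclideanSpace ℝ (Fin n)) : 0 ≤ unitBump n z :=
  ContDiffBump.nonneg_normed _ _

lemma unitBump_integral : ∫ z, unitBump n z = 1 := ContDiffBump.integral_normed _

lemma unitBump_hasCompactSupport : HasCompactSupport (unitBump n) :=
  ContDiffBump.hasCompactSupport_normed _

lemma unitBump_eq_zero {z : EuclideanSpace ℝ (Fin n)} (hz : 1 ≤ ‖z‖) : unitBump n z = 0 := by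
  have : z ∉ Function.support (unitBump n) := by
    rw [unitBump, ContDiffBump.support_normed_eq]
    simpa using hz
  simpa using this

/-- Mollification of `Q` with radius `ε ξ` at the point `ξ`. -/
def mollify (Q ε : EuclideanSpace ℝ (Fin n) → ℝ) (ξ : EuclideanSpace ℝ (Fin n)) : ℝ :=
  ∫ z, Q (ξ - ε ξ • z) * unitBump n z

variable {Q ε : EuclideanSpace ℝ (Fin n) → ℝ}

lemma mollify_integrable (hQ : Continuous Q) (ξ : EuclideanSpace ℝ (Fin n)) (r : ℝ) :
    Integrable fun z => Q (ξ - r • z) * unitBump n z := by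
  refine Continuous.integrable_of_hasCompactSupport ?_ unitBump_hasCompactSupport.mul_left
  exact (hQ.comp (by fun_prop)).mul unitBump_contDiff.continuous

lemma contDiff_mollify (hQ : Continuous Q) (hε : ContDiff ℝ (⊤:ℕ∞) ε)
    (hpos : ∀ ξ, 0 < ε ξ) (hle : ∀ ξ, ε ξ ≤ 1) : ContDiff ℝ (⊤:ℕ∞) (mollify Q ε) := by
  set g : EuclideanSpace ℝ (Fin n) → EuclideanSpace ℝ (Fin n) → ℝ :=
    fun p z => ((ε p) ^ n)⁻¹ * unitBump n ((ε p)⁻¹ • z) with hg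
  have hgsm : ContDiff ℝ (⊤:ℕ∞) (Function.uncurry g) := by
    have h1 : ContDiff ℝ (⊤:ℕ∞) fun q : EuclideanSpace ℝ (Fin n) × EuclideanSpace ℝ (Fin n) =>
        ε q.1 := hε.comp contDiff_fst
    refine ContDiff.mul ((h1.pow n).inv fun q => (pow_pos (hpos _) n).ne') ?_
    exact unitBump_contDiff.comp ((h1.inv fun q => (hpos _).ne').smul contDiff_snd)
  have hconv := contDiffOn_convolution_right_with_param_comp (μ := volume) (f := Q)
    (ContinuousLinearMap.mul ℝ ℝ) (s := univ) (v := fun p => p) (n := (⊤:ℕ∞))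
    (g := g) (k := Metric.closedBall 0 1) contDiffOn_id isOpen_univ (isCompact_closedBall _ _)
    (by
      intro p z _ hz
      have h1 : 1 < ‖z‖ := by simpa using hz
      have h2 : 1 ≤ ‖(ε p)⁻¹ • z‖ := by
        rw [norm_smul, norm_inv, Real.norm_of_nonneg (hpos p).le]
        have : 1 ≤ (ε p)⁻¹ := (one_le_inv₀ (hpos p)).2 (hle p)
        nlinarith
      simp [hg, unitBump_eq_zero h2])
    hQ.locallyIntegrable hgsm.contDiffOn
  rw [contDiffOn_univ] at hconv
  convert hconv using 2 with p
  rw [convolution_def, ← integral_sub_left_eq_self _ volume p, mollify]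
  have hscale := Measure.integral_comp_smul (volume : Measure (EuclideanSpace ℝ (Fin n)))
    (fun t => Q (p - t) * unitBump n ((ε p)⁻¹ • t)) (ε p)
  simp only [smul_smul, inv_mul_cancel₀ (hpos p).ne', one_smul, finrank_euclideanSpace,
    Fintype.card_fin] at hscale
  rw [hscale, abs_of_nonneg (inv_nonneg.2 (pow_nonneg (hpos p).le n)), smul_eq_mul,
    ← integral_const_mul]
  refine integral_congr_ae (Eventually.of_forall fun t => ?_)
  simp [hg]
  ring

lemma abs_mollify_sub_le (hQ : Continuous Q) {ξ : EuclideanSpace ℝ (Fin n)} (hpos : 0 < ε ξ)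
    {κ : ℝ} (h : ∀ ζ ∈ Metric.closedBall ξ (ε ξ), |Q ζ - Q ξ| ≤ κ) :
    |mollify Q ε ξ - Q ξ| ≤ κ := by
  have h1 : mollify Q ε ξ - Q ξ = ∫ z, (Q (ξ - ε ξ • z) - Q ξ) * unitBump n z := by
    simp only [sub_mul]
    rw [integral_sub (mollify_integrable hQ ξ (ε ξ))
      ((unitBump_contDiff.continuous.integrable_of_hasCompactSupport
        unitBump_hasCompactSupport).const_mul _), integral_const_mul, unitBump_integral, mul_one,
      mollify]
  have h2 : ∫ z, κ * unitBump n z = κ := by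
    rw [integral_const_mul, unitBump_integral, mul_one]
  rw [h1, ← h2, ← Real.norm_eq_abs]
  refine norm_integral_le_of_norm_le ((unitBump_contDiff.continuous.integrable_of_hasCompactSupport
    unitBump_hasCompactSupport).const_mul _) (Eventually.of_forall fun z => ?_)
  rw [norm_mul, Real.norm_of_nonneg (unitBump_nonneg z), Real.norm_eq_abs]
  by_cases hz : 1 ≤ ‖z‖
  · simp [unitBump_eq_zero hz]
  · refine mul_le_mul_of_nonneg_right (h _ ?_) (unitBump_nonneg z)
    rw [Metric.mem_closedBall, dist_eq_norm, sub_sub_cancel_left, norm_neg, norm_smul,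
      Real.norm_of_nonneg hpos.le]
    nlinarith [norm_nonneg z]

lemma fderiv_mollify_le (hQ : Continuous Q) (hpos : ∀ ξ, 0 < ε ξ)
    {ξ v : EuclideanSpace ℝ (Fin n)} (hε : DifferentiableAt ℝ ε ξ)
    (hM : DifferentiableAt ℝ (mollify Q ε) ξ) {δ L τ₀ ρ : ℝ} (hτ₀ : 0 < τ₀) (hL0 : 0 ≤ L)
    (hρ : ε ξ < ρ)
    (hdec : ∀ ζ ∈ Metric.closedBall ξ (ε ξ), ∀ τ ∈ Ioo 0 τ₀, Q (ζ + τ • v) ≤ Q ζ - δ * τ)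
    (hL : ∀ a ∈ Metric.closedBall ξ ρ, ∀ b ∈ Metric.closedBall ξ ρ, |Q a - Q b| ≤ L * ‖a - b‖) :
    fderiv ℝ (mollify Q ε) ξ v ≤ -δ + L * |fderiv ℝ ε ξ v| := by
  have hline : ∀ {F : EuclideanSpace ℝ (Fin n) → ℝ}, DifferentiableAt ℝ F ξ →
      Tendsto (fun τ : ℝ => τ⁻¹ * (F (ξ + τ • v) - F ξ)) (𝓝[>] 0) (𝓝 (fderiv ℝ F ξ v)) := by
    intro F hF
    have := (hF.hasFDerivAt.hasLineDerivAt v).tendsto_slope_zero_right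
    simpa using this
  have hrhs : Tendsto (fun τ : ℝ => -δ + L * |τ⁻¹ * (ε (ξ + τ • v) - ε ξ)|) (𝓝[>] 0)
      (𝓝 (-δ + L * |fderiv ℝ ε ξ v|)) :=
    ((hline hε).abs.const_mul L).const_add _
  refine le_of_tendsto_of_tendsto (hline hM) hrhs ?_
  have hc0 : Tendsto (fun τ : ℝ => ξ + τ • v) (𝓝[>] 0) (𝓝 ξ) := by
    have : Continuous fun τ : ℝ => ξ + τ • v := by fun_prop
    exact tendsto_nhdsWithin_of_tendsto_nhds (by simpa using this.tendsto 0)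
  have hn0 : Tendsto (fun τ : ℝ => ‖τ • v‖) (𝓝[>] 0) (𝓝 0) := by
    have : Continuous fun τ : ℝ => ‖τ • v‖ := by fun_prop
    exact tendsto_nhdsWithin_of_tendsto_nhds (by simpa using this.tendsto 0)
  have hev1 : ∀ᶠ τ : ℝ in 𝓝[>] 0, ‖τ • v‖ + ε (ξ + τ • v) < ρ := by
    have := hn0.add (hε.continuousAt.tendsto.comp hc0)
    rw [zero_add] at this
    exact this.eventually (gt_mem_nhds hρ)
  have hev2 : ∀ᶠ τ : ℝ in 𝓝[>] 0, ‖τ • v‖ + ε ξ < ρ := by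
    have := hn0.add_const (ε ξ)
    rw [zero_add] at this
    exact this.eventually (gt_mem_nhds hρ)
  filter_upwards [hev1, hev2, Ioo_mem_nhdsGT hτ₀] with τ h1 h2 hτ
  have hτ0 : 0 < τ := hτ.1
  have key : mollify Q ε (ξ + τ • v) ≤
      mollify Q ε ξ + (-δ * τ + L * |ε (ξ + τ • v) - ε ξ|) := by
    have hbI := (unitBump_contDiff (n := n)).continuous.integrable_of_hasCompactSupport
      unitBump_hasCompactSupport (μ := volume)
    have h3 : mollify Q ε ξ + (-δ * τ + L * |ε (ξ + τ • v) - ε ξ|) =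
        ∫ z, (Q (ξ - ε ξ • z) * unitBump n z +
          (-δ * τ + L * |ε (ξ + τ • v) - ε ξ|) * unitBump n z) := by
      rw [integral_add (mollify_integrable hQ ξ (ε ξ)) (hbI.const_mul _), integral_const_mul,
        unitBump_integral, mul_one, mollify]
    rw [h3, mollify]
    refine integral_mono (mollify_integrable hQ _ _)
      ((mollify_integrable hQ ξ (ε ξ)).add (hbI.const_mul _)) fun z => ?_
    change _ ≤ Q (ξ - ε ξ • z) * unitBump n z +
      (-δ * τ + L * |ε (ξ + τ • v) - ε ξ|) * unitBump n z
    rw [← add_mul]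
    by_cases hz : 1 ≤ ‖z‖
    · simp [unitBump_eq_zero hz]
    · have hz' : ‖z‖ ≤ 1 := (not_le.1 hz).le
      refine mul_le_mul_of_nonneg_right ?_ (unitBump_nonneg z)
      have hmul : ∀ r : ℝ, 0 ≤ r → ‖r • z‖ ≤ r := fun r hr => by
        rw [norm_smul, Real.norm_of_nonneg hr]; nlinarith [norm_nonneg z]
      have hd := hdec (ξ - ε ξ • z) (by
        rw [Metric.mem_closedBall, dist_eq_norm, sub_sub_cancel_left, norm_neg]
        exact hmul _ (hpos ξ).le) τ hτ
      have hl := hL (ξ + τ • v - ε (ξ + τ • v) • z) (by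
          rw [Metric.mem_closedBall, dist_eq_norm]
          have : ξ + τ • v - ε (ξ + τ • v) • z - ξ = τ • v - ε (ξ + τ • v) • z := by abel
          rw [this]
          exact (norm_sub_le _ _).trans
            ((add_le_add le_rfl (hmul _ (hpos (ξ + τ • v)).le)).trans h1.le))
        (ξ - ε ξ • z + τ • v) (by
          rw [Metric.mem_closedBall, dist_eq_norm]
          have : ξ - ε ξ • z + τ • v - ξ = τ • v - ε ξ • z := by abel
          rw [this]
          exact (norm_sub_le _ _).trans ((add_le_add le_rfl (hmul _ (hpos ξ).le)).trans h2.le))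
      have hnorm : ‖ξ + τ • v - ε (ξ + τ • v) • z - (ξ - ε ξ • z + τ • v)‖ ≤
          |ε (ξ + τ • v) - ε ξ| := by
        have : ξ + τ • v - ε (ξ + τ • v) • z - (ξ - ε ξ • z + τ • v) =
            -((ε (ξ + τ • v) - ε ξ) • z) := by rw [sub_smul]; abel
        rw [this, norm_neg, norm_smul, Real.norm_eq_abs]
        nlinarith [norm_nonneg z, abs_nonneg (ε (ξ + τ • v) - ε ξ)]
      have := mul_le_mul_of_nonneg_left hnorm hL0
      linarith [le_abs_self (Q (ξ + τ • v - ε (ξ + τ • v) • z) - Q (ξ - ε ξ • z + τ • v))]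
  rw [abs_mul, abs_of_pos (inv_pos.2 hτ0), inv_mul_le_iff₀ hτ0]
  have : τ * (-δ + L * (τ⁻¹ * |ε (ξ + τ • v) - ε ξ|)) =
      -δ * τ + L * |ε (ξ + τ • v) - ε ξ| := by field_simp
  linarith

end Mollify

section Inputs

variable {m : ℕ} {u v : ℝ → EuclideanSpace ℝ (Fin m)} {C : ℝ}

theorem uNorm_nonneg (u : ℝ → EuclideanSpace ℝ (Fin m)) : 0 ≤ uNorm u := ENNReal.toReal_nonneg

theorem BddInput.ae_norm_le (hb : BddInput u) :
    ∀ᵐ t ∂(volume.restrict (Ici (0:ℝ))), ‖u t‖ ≤ uNorm u := by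
  filter_upwards [ENNReal.ae_le_essSup (μ := volume.restrict (Ici (0:ℝ)))
    (fun t => (‖u t‖₊ : ℝ≥0∞))] with t ht
  have := ENNReal.toReal_mono hb ht
  simpa [uNorm] using this

theorem uNormE_le_of_ae_le
    (h : ∀ᵐ t ∂(volume.restrict (Ici (0:ℝ))), ‖u t‖ ≤ C) : uNormE u ≤ ENNReal.ofReal C := by
  refine essSup_le_of_ae_le _ ?_
  filter_upwards [h] with t ht
  rw [← ENNReal.ofReal_coe_nnreal, coe_nnnorm]
  exact ENNReal.ofReal_le_ofReal ht

theorem bddInput_of_ae_le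
    (h : ∀ᵐ t ∂(volume.restrict (Ici (0:ℝ))), ‖u t‖ ≤ C) : BddInput u :=
  ((uNormE_le_of_ae_le h).trans_lt ENNReal.ofReal_lt_top).ne

theorem uNorm_le_of_ae_le (hC : 0 ≤ C)
    (h : ∀ᵐ t ∂(volume.restrict (Ici (0:ℝ))), ‖u t‖ ≤ C) : uNorm u ≤ C := by
  have := ENNReal.toReal_mono ENNReal.ofReal_ne_top (uNormE_le_of_ae_le h)
  rwa [ENNReal.toReal_ofReal hC] at this

theorem isInput_of_ae_le (hu : Measurable u)
    (h : ∀ᵐ t ∂(volume.restrict (Ici (0:ℝ))), ‖u t‖ ≤ C) : IsInput u :=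
  ⟨hu, fun _ _ => ⟨C, ae_restrict_of_ae_restrict_of_subset Icc_subset_Ici_self h⟩⟩

/-- The input equal to the constant `μ` up to time `τ`, followed by `u`. -/
def concatInput (μ : EuclideanSpace ℝ (Fin m)) (τ : ℝ) (u : ℝ → EuclideanSpace ℝ (Fin m)) :
    ℝ → EuclideanSpace ℝ (Fin m) := fun s => if s < τ then μ else u (s - τ)

theorem measurable_concatInput (hu : Measurable u) (μ : EuclideanSpace ℝ (Fin m)) (τ : ℝ) :
    Measurable (concatInput μ τ u) :=
  Measurable.ite measurableSet_Iio measurable_const (hu.comp (measurable_id.sub_const τ))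

theorem ae_norm_concatInput_le (hb : BddInput u) (μ : EuclideanSpace ℝ (Fin m)) (τ : ℝ) :
    ∀ᵐ t ∂(volume.restrict (Ici (0:ℝ))), ‖concatInput μ τ u t‖ ≤ max ‖μ‖ (uNorm u) := by
  have h1 := hb.ae_norm_le
  rw [ae_restrict_iff' measurableSet_Ici] at h1 ⊢
  have h2 : ∀ᵐ t, t - τ ∈ Ici (0:ℝ) → ‖u (t - τ)‖ ≤ uNorm u :=
    (measurePreserving_sub_right volume τ).quasiMeasurePreserving.ae h1
  filter_upwards [h2] with t ht _
  unfold concatInput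
  split_ifs with hlt
  · exact le_max_left _ _
  · exact (ht (by simpa using not_lt.1 hlt)).trans (le_max_right _ _)

theorem ae_norm_const_le (μ : EuclideanSpace ℝ (Fin m)) :
    ∀ᵐ t ∂(volume.restrict (Ici (0:ℝ))), ‖(fun _ : ℝ => μ) t‖ ≤ ‖μ‖ :=
  ae_of_all _ fun _ => le_rfl

end Inputs

section Balls

variable {n m : ℕ} {p : ℕ}

theorem exists_lipschitz_closedBall {h : EuclideanSpace ℝ (Fin n) → EuclideanSpace ℝ (Fin p)}
    (hh : LocallyLipschitz h) (R : ℝ) :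
    ∃ L : ℝ, 0 ≤ L ∧ ∀ a b, ‖a‖ ≤ R → ‖b‖ ≤ R → ‖h a - h b‖ ≤ L * ‖a - b‖ := by
  obtain ⟨K, hK⟩ := (hh.locallyLipschitzOn
    (s := Metric.closedBall 0 R)).exists_lipschitzOnWith_of_compact (isCompact_closedBall _ _)
  refine ⟨K, K.2, fun a b ha hb => ?_⟩
  have := hK.dist_le_mul a (by simpa using ha) b (by simpa using hb)
  simpa [dist_eq_norm] using this

variable {f : EuclideanSpace ℝ (Fin n) → EuclideanSpace ℝ (Fin m) → EuclideanSpace ℝ (Fin n)}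

theorem exists_lipschitz_vectorField
    (hf : LocallyLipschitz fun q : EuclideanSpace ℝ (Fin n) × EuclideanSpace ℝ (Fin m) =>
      f q.1 q.2) (R r : ℝ) :
    ∃ L : ℝ, 0 ≤ L ∧ ∀ a b μ, ‖a‖ ≤ R → ‖b‖ ≤ R → ‖μ‖ ≤ r → ‖f a μ - f b μ‖ ≤ L * ‖a - b‖ := by
  obtain ⟨K, hK⟩ := (hf.locallyLipschitzOn
    (s := Metric.closedBall 0 R ×ˢ Metric.closedBall 0 r)).exists_lipschitzOnWith_of_compact
      ((isCompact_closedBall _ _).prod (isCompact_closedBall _ _))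
  refine ⟨K, K.2, fun a b μ ha hb hμ => ?_⟩
  have := hK.dist_le_mul (a, μ) ⟨by simpa using ha, by simpa using hμ⟩ (b, μ)
    ⟨by simpa using hb, by simpa using hμ⟩
  simpa [dist_eq_norm, Prod.norm_def] using this

theorem exists_bound_vectorField
    (hf : LocallyLipschitz fun q : EuclideanSpace ℝ (Fin n) × EuclideanSpace ℝ (Fin m) =>
      f q.1 q.2) (R r : ℝ) :
    ∃ F : ℝ, 0 ≤ F ∧ ∀ a μ, ‖a‖ ≤ R → ‖μ‖ ≤ r → ‖f a μ‖ ≤ F := by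
  obtain ⟨F, hF⟩ := ((isCompact_closedBall (0 : EuclideanSpace ℝ (Fin n)) R).prod
    (isCompact_closedBall (0 : EuclideanSpace ℝ (Fin m)) r)).exists_bound_of_continuousOn
      hf.continuous.continuousOn
  refine ⟨max F 0, le_max_right _ _, fun a μ ha hμ => ?_⟩
  exact (hF (a, μ) ⟨by simpa using ha, by simpa using hμ⟩).trans (le_max_left _ _)

end Balls

section Trajectories

variable {n m : ℕ}
  {f : EuclideanSpace ℝ (Fin n) → EuclideanSpace ℝ (Fin m) → EuclideanSpace ℝ (Fin n)}
  {x : ℝ → EuclideanSpace ℝ (Fin n) → (ℝ → EuclideanSpace ℝ (Fin m)) → EuclideanSpace ℝ (Fin n)}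
  {u w : ℝ → EuclideanSpace ℝ (Fin m)} {ξ : EuclideanSpace ℝ (Fin n)}

/-- The integral from `0` is a measurable function of its upper end point, even when the integrand
fails to be integrable from some time on. -/
theorem aestronglyMeasurable_primitive {E : Type*} [NormedAddCommGroup E] [NormedSpace ℝ E]
    (g : ℝ → E) :
    AEStronglyMeasurable (fun t => ∫ s in (0:ℝ)..t, g s) (volume.restrict (Ici (0:ℝ))) := by
  set S : Set ℝ := {t | 0 ≤ t ∧ IntervalIntegrable g volume 0 t} with hS
  have hdown : ∀ t ∈ S, Icc 0 t ⊆ S := fun t ht s hs =>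
    ⟨hs.1, ht.2.mono_set (by rw [uIcc_of_le hs.1, uIcc_of_le ht.1]; exact Icc_subset_Icc_right hs.2)⟩
  have hmeas : MeasurableSet S := by
    have : S.OrdConnected := ⟨fun a ha b hb c hc => hdown b hb ⟨ha.1.trans hc.1, hc.2⟩⟩
    exact this.measurableSet
  have hcont : ContinuousOn (fun t => ∫ s in (0:ℝ)..t, g s) S := by
    have key : ∀ t ∈ S, ContinuousOn (fun t => ∫ s in (0:ℝ)..t, g s) (Icc 0 t) := fun t ht => by
      have := intervalIntegral.continuousOn_primitive_interval' ht.2 left_mem_uIcc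
      rwa [uIcc_of_le ht.1] at this
    intro t ht
    by_cases hex : ∃ t' ∈ S, t < t'
    · obtain ⟨t', ht', hlt⟩ := hex
      refine ((key t' ht') t ⟨ht.1, hlt.le⟩).mono_of_mem_nhdsWithin ?_
      filter_upwards [self_mem_nhdsWithin, mem_nhdsWithin_of_mem_nhds (Iio_mem_nhds hlt)]
        with s hs hs'
      exact ⟨hs.1, le_of_lt hs'⟩
    · push Not at hex
      exact ((key t ht) t ⟨ht.1, le_rfl⟩).mono fun s hs => ⟨hs.1, hex s hs⟩
  have hunion : Ici (0:ℝ) = S ∪ (Ici 0 \ S) :=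
    (union_sdiff_cancel fun t ht => ht.1).symm
  rw [hunion, aestronglyMeasurable_union_iff]
  refine ⟨hcont.aestronglyMeasurable hmeas, ?_⟩
  refine (aestronglyMeasurable_const (b := (0:E))).congr ?_
  filter_upwards [ae_restrict_mem (measurableSet_Ici.diff hmeas)] with t ht
  exact (intervalIntegral.integral_undef fun hi => ht.2 ⟨ht.1, hi⟩).symm

theorem intervalIntegrable_vectorField {X : ℝ → EuclideanSpace ℝ (Fin n)} {R C T : ℝ}
    (hf : LocallyLipschitz fun q : EuclideanSpace ℝ (Fin n) × EuclideanSpace ℝ (Fin m) =>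
      f q.1 q.2)
    (hu : Measurable u) (hC : ∀ᵐ t ∂(volume.restrict (Ici (0:ℝ))), ‖u t‖ ≤ C)
    (hX : AEStronglyMeasurable X (volume.restrict (Ici (0:ℝ)))) (hR : ∀ t, 0 ≤ t → ‖X t‖ ≤ R)
    (hT : 0 ≤ T) : IntervalIntegrable (fun s => f (X s) (u s)) volume 0 T := by
  obtain ⟨F, -, hF⟩ := exists_bound_vectorField hf R C
  rw [intervalIntegrable_iff_integrableOn_Ioc_of_le hT]
  have hsub : Ioc 0 T ⊆ Ici (0:ℝ) := fun t ht => ht.1.le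
  refine IntegrableOn.of_bound (by simp) ?_ F ?_
  · have : AEStronglyMeasurable (fun s => f (X s) (u s)) (volume.restrict (Ici (0:ℝ))) :=
      hf.continuous.comp_aestronglyMeasurable (hX.prodMk hu.aestronglyMeasurable)
    exact this.mono_set hsub
  · filter_upwards [ae_restrict_mem measurableSet_Ioc,
      ae_restrict_of_ae_restrict_of_subset hsub hC] with t ht h1
    exact hF _ _ (hR t ht.1.le) h1

theorem IsSolutionMap.initial (hx : IsSolutionMap f x) (hu : IsInput u) : x 0 ξ u = ξ := by
  simpa using hx ξ u hu 0 (mem_Ici.2 le_rfl)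

/-- `X` solves the integral equation of `ẋ = f(x,w)` on `[0,T]`, with an integrable right-hand
side. -/
def IsTraj (f : EuclideanSpace ℝ (Fin n) → EuclideanSpace ℝ (Fin m) → EuclideanSpace ℝ (Fin n))
    (w : ℝ → EuclideanSpace ℝ (Fin m)) (T : ℝ) (X : ℝ → EuclideanSpace ℝ (Fin n)) : Prop :=
  IntervalIntegrable (fun s => f (X s) (w s)) volume 0 T ∧
    ∀ t ∈ Icc 0 T, X t = X 0 + ∫ s in (0:ℝ)..t, f (X s) (w s)

theorem IsBIBS.isTraj
    (hf : LocallyLipschitz fun q : EuclideanSpace ℝ (Fin n) × EuclideanSpace ℝ (Fin m) =>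
      f q.1 q.2) (hB : IsBIBS f x) (hu : IsInput u) (hb : BddInput u) (ξ : EuclideanSpace ℝ (Fin n))
    {T : ℝ} (hT : 0 ≤ T) : IsTraj f u T fun t => x t ξ u := by
  obtain ⟨hx, σ, -, hσ⟩ := hB
  refine ⟨?_, fun t ht => ?_⟩
  · refine intervalIntegrable_vectorField hf hu.1 hb.ae_norm_le ?_ (hσ ξ u hu hb) hT
    refine ((aestronglyMeasurable_primitive fun s => f (x s ξ u) (u s)).const_add ξ).congr ?_
    filter_upwards [ae_restrict_mem measurableSet_Ici] with t ht using (hx ξ u hu t ht).symm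
  · simp only [hx.initial hu]
    exact hx ξ u hu t ht.1

namespace IsTraj

variable {T τ L R r : ℝ} {X Y : ℝ → EuclideanSpace ℝ (Fin n)}

theorem continuousOn (hX : IsTraj f w T X) (hT : 0 ≤ T) : ContinuousOn X (Icc 0 T) := by
  have h1 := intervalIntegral.continuousOn_primitive_interval' hX.1 left_mem_uIcc
  rw [uIcc_of_le hT] at h1
  exact (continuousOn_const.add h1).congr hX.2

theorem mono (hX : IsTraj f w T X) (hτ : 0 ≤ τ) (hle : τ ≤ T) : IsTraj f w τ X :=
  ⟨hX.1.mono_set (by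
    rw [uIcc_of_le hτ, uIcc_of_le (hτ.trans hle)]; exact Icc_subset_Icc_right hle),
    fun t ht => hX.2 t ⟨ht.1, ht.2.trans hle⟩⟩

theorem congr_input {w' : ℝ → EuclideanSpace ℝ (Fin m)} (hX : IsTraj f w T X) (hT : 0 ≤ T)
    (h : ∀ s ∈ Ioo 0 T, w s = w' s) : IsTraj f w' T X := by
  refine ⟨hX.1.congr_uIoo fun s hs => ?_, fun t ht => ?_⟩
  · rw [uIoo_of_le hT] at hs
    simp only [h s hs]
  · rw [hX.2 t ht]
    congr 1
    refine intervalIntegral.integral_congr_Ioo_of_le ht.1 fun s hs => ?_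
    simp only [h s ⟨hs.1, hs.2.trans_le ht.2⟩]

theorem sub_eq_integral (hX : IsTraj f w T X) {s t : ℝ} (hs : s ∈ Icc 0 T) (ht : t ∈ Icc 0 T) :
    X t - X s = ∫ q in s..t, f (X q) (w q) := by
  have hi : ∀ t ∈ Icc 0 T, IntervalIntegrable (fun s => f (X s) (w s)) volume 0 t :=
    fun t ht => (hX.mono ht.1 ht.2).1
  rw [hX.2 t ht, hX.2 s hs, ← intervalIntegral.integral_interval_sub_left (hi t ht) (hi s hs)]
  abel

theorem shift (hX : IsTraj f w (τ + T) X) (hτ : 0 ≤ τ) (hT : 0 ≤ T) :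
    IsTraj f (fun s => w (τ + s)) T fun s => X (τ + s) := by
  refine ⟨?_, fun t ht => ?_⟩
  · have h1 : IntervalIntegrable (fun s => f (X s) (w s)) volume τ (τ + T) :=
      hX.1.mono_set (by
        rw [uIcc_of_le (by linarith), uIcc_of_le (by linarith)]; exact Icc_subset_Icc_left hτ)
    have := h1.comp_add_left τ
    simpa using this
  · have := hX.sub_eq_integral (s := τ) (t := τ + t) ⟨hτ, by linarith⟩
      ⟨by linarith [ht.1], by linarith [ht.2]⟩
    rw [intervalIntegral.integral_comp_add_left (fun s => f (X s) (w s)) τ]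
    simp only [add_zero]
    rw [← this]
    abel

theorem norm_sub_le_mul_exp (hX : IsTraj f w T X) (hY : IsTraj f w T Y) (hL : 0 ≤ L)
    (hLip : ∀ a b μ, ‖a‖ ≤ R → ‖b‖ ≤ R → ‖μ‖ ≤ r → ‖f a μ - f b μ‖ ≤ L * ‖a - b‖)
    (hXR : ∀ t ∈ Icc 0 T, ‖X t‖ ≤ R) (hYR : ∀ t ∈ Icc 0 T, ‖Y t‖ ≤ R)
    (hw : ∀ᵐ t ∂(volume.restrict (Ici (0:ℝ))), ‖w t‖ ≤ r) {t : ℝ} (ht : t ∈ Icc 0 T) :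
    ‖X t - Y t‖ ≤ ‖X 0 - Y 0‖ * Real.exp (L * t) := by
  have hT : 0 ≤ T := ht.1.trans ht.2
  set D : ℝ → ℝ := fun t => ‖X (max 0 (min t T)) - Y (max 0 (min t T))‖ with hD
  have hclip : ∀ t, max 0 (min t T) ∈ Icc 0 T := fun t =>
    ⟨le_max_left _ _, max_le hT (min_le_right _ _)⟩
  have hDeq : ∀ t ∈ Icc 0 T, D t = ‖X t - Y t‖ := fun t ht => by
    simp only [hD, min_eq_left ht.2, max_eq_right ht.1]
  have hDc : Continuous D := by
    have hc : Continuous fun t => max 0 (min t T) := by fun_prop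
    exact (((hX.continuousOn hT).comp_continuous hc hclip).sub
      ((hY.continuousOn hT).comp_continuous hc hclip)).norm
  set G : ℝ → ℝ := fun t => ‖X 0 - Y 0‖ + ∫ s in (0:ℝ)..t, L * D s with hG
  have hLD : Continuous fun s => L * D s := continuous_const.mul hDc
  have hGd : ∀ t, HasDerivAt G (L * D t) t := fun t =>
    (intervalIntegral.integral_hasDerivAt_right (hLD.intervalIntegrable _ _)
      (hLD.stronglyMeasurableAtFilter _ _) hLD.continuousAt).const_add _
  have hDG : ∀ t ∈ Icc 0 T, D t ≤ G t := by
    intro t ht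
    rw [hDeq t ht, hX.2 t ht, hY.2 t ht]
    have hsplit : X 0 + (∫ s in (0:ℝ)..t, f (X s) (w s)) - (Y 0 + ∫ s in (0:ℝ)..t, f (Y s) (w s)) =
        (X 0 - Y 0) + ∫ s in (0:ℝ)..t, (f (X s) (w s) - f (Y s) (w s)) := by
      rw [intervalIntegral.integral_sub (hX.mono ht.1 ht.2).1 (hY.mono ht.1 ht.2).1]
      abel
    rw [hsplit]
    refine (norm_add_le _ _).trans (add_le_add_right ?_ _)
    refine intervalIntegral.norm_integral_le_of_norm_le ht.1 ?_ (hLD.intervalIntegrable _ _)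
    have hw' := (ae_restrict_iff' measurableSet_Ici).1 hw
    filter_upwards [hw'] with s hs hst
    have hsT : s ∈ Icc 0 T := ⟨hst.1.le, hst.2.trans ht.2⟩
    rw [hDeq s hsT]
    exact hLip _ _ _ (hXR s hsT) (hYR s hsT) (hs hst.1.le)
  have hDnn : ∀ t, 0 ≤ D t := fun t => norm_nonneg _
  have hb := norm_le_gronwallBound_of_norm_deriv_right_le (f := G) (f' := fun t => L * D t)
    (δ := ‖X 0 - Y 0‖) (K := L) (ε := 0) (a := 0) (b := T)
    (fun t _ => (hGd t).continuousAt.continuousWithinAt) (fun t _ => (hGd t).hasDerivWithinAt)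
    (by simp [hG]) (fun t ht => by
      have h1 := hDG t (Ico_subset_Icc_self ht)
      rw [add_zero, Real.norm_of_nonneg (mul_nonneg hL (hDnn t)),
        Real.norm_of_nonneg ((hDnn t).trans h1)]
      exact mul_le_mul_of_nonneg_left h1 hL) t ht
  rw [gronwallBound_ε0, sub_zero] at hb
  rw [← hDeq t ht]
  exact (hDG t ht).trans ((le_abs_self _).trans hb)

theorem eq_of_initial_eq
    (hf : LocallyLipschitz fun q : EuclideanSpace ℝ (Fin n) × EuclideanSpace ℝ (Fin m) =>
      f q.1 q.2) (hX : IsTraj f w T X) (hY : IsTraj f w T Y)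
    (hw : ∀ᵐ t ∂(volume.restrict (Ici (0:ℝ))), ‖w t‖ ≤ r) (h0 : X 0 = Y 0) {t : ℝ}
    (ht : t ∈ Icc 0 T) : X t = Y t := by
  have hT : 0 ≤ T := ht.1.trans ht.2
  obtain ⟨R₁, h₁⟩ := isCompact_Icc.exists_bound_of_continuousOn (hX.continuousOn hT)
  obtain ⟨R₂, h₂⟩ := isCompact_Icc.exists_bound_of_continuousOn (hY.continuousOn hT)
  obtain ⟨L, hL, hLip⟩ := exists_lipschitz_vectorField hf (max R₁ R₂) r
  have := hX.norm_sub_le_mul_exp hY hL hLip (fun t ht => (h₁ t ht).trans (le_max_left _ _))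
    (fun t ht => (h₂ t ht).trans (le_max_right _ _)) hw ht
  rw [h0, sub_self, norm_zero, zero_mul] at this
  exact sub_eq_zero.1 (norm_le_zero_iff.1 this)

end IsTraj

theorem isInput_const (μ : EuclideanSpace ℝ (Fin m)) : IsInput fun _ : ℝ => μ :=
  isInput_of_ae_le measurable_const (ae_norm_const_le μ)

theorem bddInput_const (μ : EuclideanSpace ℝ (Fin m)) : BddInput fun _ : ℝ => μ :=
  bddInput_of_ae_le (ae_norm_const_le μ)

theorem uNorm_const_le (μ : EuclideanSpace ℝ (Fin m)) : uNorm (fun _ : ℝ => μ) ≤ ‖μ‖ :=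
  uNorm_le_of_ae_le (norm_nonneg _) (ae_norm_const_le μ)

theorem isInput_concatInput (hu : IsInput u) (hb : BddInput u) (μ : EuclideanSpace ℝ (Fin m))
    (τ : ℝ) : IsInput (concatInput μ τ u) :=
  isInput_of_ae_le (measurable_concatInput hu.1 μ τ) (ae_norm_concatInput_le hb μ τ)

theorem bddInput_concatInput (hb : BddInput u) (μ : EuclideanSpace ℝ (Fin m))
    (τ : ℝ) : BddInput (concatInput μ τ u) :=
  bddInput_of_ae_le (ae_norm_concatInput_le hb μ τ)

theorem uNorm_concatInput_le (hb : BddInput u) (μ : EuclideanSpace ℝ (Fin m))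
    (τ : ℝ) : uNorm (concatInput μ τ u) ≤ max ‖μ‖ (uNorm u) :=
  uNorm_le_of_ae_le (le_max_of_le_left (norm_nonneg _)) (ae_norm_concatInput_le hb μ τ)

/-- Semigroup property of the solution map for inputs which start with a constant. -/
theorem IsBIBS.concat
    (hf : LocallyLipschitz fun q : EuclideanSpace ℝ (Fin n) × EuclideanSpace ℝ (Fin m) =>
      f q.1 q.2) (hB : IsBIBS f x) (hu : IsInput u) (hb : BddInput u) (ξ : EuclideanSpace ℝ (Fin n))
    (μ : EuclideanSpace ℝ (Fin m)) {τ t : ℝ} (hτ : 0 ≤ τ) (ht : 0 ≤ t) :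
    x (τ + t) ξ (concatInput μ τ u) = x t (x τ ξ fun _ => μ) u := by
  have hw := isInput_concatInput hu hb μ τ
  have hwb := bddInput_concatInput hb μ τ
  have hX := hB.isTraj hf hw hwb ξ (add_nonneg hτ ht)
  have hstart : x τ ξ (concatInput μ τ u) = x τ ξ fun _ => μ :=
    ((hX.mono hτ (by linarith)).congr_input hτ
      (w' := fun _ => μ) fun s hs => if_pos hs.2).eq_of_initial_eq hf
      (hB.isTraj hf (isInput_const μ) (bddInput_const μ) ξ hτ) (ae_norm_const_le μ)
      (by rw [hB.1.initial hw, hB.1.initial (isInput_const μ)]) ⟨hτ, le_rfl⟩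
  refine ((hX.shift hτ ht).congr_input ht (w' := u) fun s hs => ?_).eq_of_initial_eq hf
    (hB.isTraj hf hu hb (x τ ξ fun _ => μ) ht) hb.ae_norm_le ?_ ⟨ht, le_rfl⟩
  · simp only [concatInput, if_neg (not_lt.2 (le_add_of_nonneg_right hs.1.le)), add_sub_cancel_left]
  · rw [hB.1.initial hu, add_zero, hstart]

end Trajectories

section OutputSup

variable {n m p : ℕ}

/-- The weight attached to an output value of norm `y` observed at time `t`, for an input whose
gain is at most `a`. -/
def outputWeight (y a t : ℝ) : ℝ := max 0 (min (y - a) a) * (1 + t / (1 + t))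

theorem outputWeight_nonneg {y a t : ℝ} (ht : 0 ≤ t) : 0 ≤ outputWeight y a t :=
  mul_nonneg (le_max_left _ _) (by positivity)

theorem one_add_div_lt_two {t : ℝ} (ht : 0 ≤ t) : 1 + t / (1 + t) < 2 := by
  have : t / (1 + t) < 1 := (div_lt_one (by linarith)).2 (by linarith)
  linarith

theorem outputWeight_le {y a t : ℝ} (ht : 0 ≤ t) :
    outputWeight y a t ≤ 2 * max 0 (min (y - a) a) := by
  rw [outputWeight, mul_comm]
  exact mul_le_mul_of_nonneg_right (one_add_div_lt_two ht).le (le_max_left _ _)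

theorem lt_min_of_lt_outputWeight {y a t c : ℝ} (ht : 0 ≤ t) (hc : 0 ≤ c)
    (h : c < outputWeight y a t) : c / 2 < min (y - a) a := by
  have h1 := h.trans_le (outputWeight_le ht)
  have h2 : c / 2 < max 0 (min (y - a) a) := by linarith
  rcases lt_max_iff.1 h2 with h3 | h3
  · linarith
  · exact h3

theorem outputWeight_le_add {y y' a t d : ℝ} (ht : 0 ≤ t) (h : y ≤ y' + d) (hd : 0 ≤ d) :
    outputWeight y a t ≤ outputWeight y' a t + 2 * d := by
  have h1 : max 0 (min (y - a) a) ≤ max 0 (min (y' - a) a) + d := by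
    refine max_le (by linarith [le_max_left 0 (min (y' - a) a)]) ?_
    refine (?_ : _ ≤ min (y' - a) a + d).trans (by gcongr; exact le_max_right _ _)
    rw [← min_add_add_right]
    exact min_le_min (by linarith) (by linarith)
  have h2 : 0 ≤ 1 + t / (1 + t) := by positivity
  calc outputWeight y a t ≤ (max 0 (min (y' - a) a) + d) * (1 + t / (1 + t)) :=
        mul_le_mul_of_nonneg_right h1 h2
    _ = outputWeight y' a t + d * (1 + t / (1 + t)) := by rw [add_mul, outputWeight]
    _ ≤ outputWeight y' a t + 2 * d := by nlinarith [one_add_div_lt_two ht]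

/-- The weighted output values reachable from the state `ξ`. -/
def outputWeights (h : EuclideanSpace ℝ (Fin n) → EuclideanSpace ℝ (Fin p))
    (x : ℝ → EuclideanSpace ℝ (Fin n) → (ℝ → EuclideanSpace ℝ (Fin m)) →
      EuclideanSpace ℝ (Fin n)) (g : ℝ → ℝ) (ξ : EuclideanSpace ℝ (Fin n)) : Set ℝ :=
  {r | ∃ a t u, 0 < a ∧ 0 ≤ t ∧ IsInput u ∧ BddInput u ∧ g (uNorm u) ≤ a ∧
    r = outputWeight ‖h (x t ξ u)‖ a t}

/-- The supremum of the weighted output values reachable from `ξ`. It is a Lyapunov function for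
the system which need not be smooth. -/
def outputSup (h : EuclideanSpace ℝ (Fin n) → EuclideanSpace ℝ (Fin p))
    (x : ℝ → EuclideanSpace ℝ (Fin n) → (ℝ → EuclideanSpace ℝ (Fin m)) →
      EuclideanSpace ℝ (Fin n)) (g : ℝ → ℝ) (ξ : EuclideanSpace ℝ (Fin n)) : ℝ :=
  sSup (outputWeights h x g ξ)

variable {f : EuclideanSpace ℝ (Fin n) → EuclideanSpace ℝ (Fin m) → EuclideanSpace ℝ (Fin n)}
  {h : EuclideanSpace ℝ (Fin n) → EuclideanSpace ℝ (Fin p)}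
  {x : ℝ → EuclideanSpace ℝ (Fin n) → (ℝ → EuclideanSpace ℝ (Fin m)) → EuclideanSpace ℝ (Fin n)}
  {g : ℝ → ℝ} {β : ℝ → ℝ → ℝ} {ξ : EuclideanSpace ℝ (Fin n)}

theorem uNorm_const_zero : uNorm (fun _ : ℝ => (0 : EuclideanSpace ℝ (Fin m))) = 0 :=
  le_antisymm ((uNorm_const_le 0).trans norm_zero.le) (uNorm_nonneg _)

theorem outputWeight_initial_mem (hx : IsSolutionMap f x) (hg0 : g 0 = 0) {a : ℝ} (ha : 0 < a) :
    max 0 (min (‖h ξ‖ - a) a) ∈ outputWeights h x g ξ :=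
  ⟨a, 0, fun _ => 0, ha, le_rfl, isInput_const 0, bddInput_const 0, by
    rw [uNorm_const_zero, hg0]; exact ha.le, by
    rw [hx.initial (isInput_const 0)]; simp [outputWeight]⟩

theorem outputWeights_nonempty (hx : IsSolutionMap f x) (hg0 : g 0 = 0) :
    (outputWeights h x g ξ).Nonempty := ⟨_, outputWeight_initial_mem hx hg0 one_pos⟩

theorem outputSup_nonneg : 0 ≤ outputSup h x g ξ :=
  Real.sSup_nonneg fun _ ⟨_, _, _, _, ht, _, _, _, hr⟩ => hr ▸ outputWeight_nonneg ht

/-- The IOS estimate bounds from below the transient term along any output which contributes to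
`outputSup`. -/
theorem lt_transient_of_lt_outputWeight {R a t c : ℝ} {u : ℝ → EuclideanSpace ℝ (Fin m)}
    (hβ : IsClassKL β)
    (hios : ∀ ξ u, IsInput u → BddInput u → ∀ t ∈ Ici (0:ℝ),
      ‖h (x t ξ u)‖ ≤ max (β ‖ξ‖ t) (g (uNorm u)))
    (hξ : ‖ξ‖ ≤ R) (hc : 0 ≤ c) (ht : 0 ≤ t) (hu : IsInput u) (hb : BddInput u)
    (hga : g (uNorm u) ≤ a) (hlt : c < outputWeight ‖h (x t ξ u)‖ a t) :
    c / 2 + a < β R t := by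
  have h1 := lt_min_of_lt_outputWeight ht hc hlt
  have h2 := h1.trans_le (min_le_left _ _)
  have h3 := hios ξ u hu hb t ht
  have h4 : β ‖ξ‖ t ≤ β R t :=
    (hβ.1 t ht).monotoneOn (norm_nonneg _) ((norm_nonneg ξ).trans hξ) hξ
  rcases le_max_iff.1 h3 with h5 | h5 <;> linarith

theorem outputWeights_le
    (hβ : IsClassKL β)
    (hios : ∀ ξ u, IsInput u → BddInput u → ∀ t ∈ Ici (0:ℝ),
      ‖h (x t ξ u)‖ ≤ max (β ‖ξ‖ t) (g (uNorm u))) {r : ℝ} (hr : r ∈ outputWeights h x g ξ) :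
    r ≤ 2 * β ‖ξ‖ 0 := by
  obtain ⟨a, t, u, ha, ht, hu, hb, hga, rfl⟩ := hr
  have h0 : 0 ≤ β ‖ξ‖ 0 := (hβ.1 0 (mem_Ici.2 le_rfl)).nonneg (norm_nonneg _)
  by_contra! hlt
  have h1 := lt_transient_of_lt_outputWeight hβ hios le_rfl (by linarith) ht hu hb hga hlt
  have h2 := (hβ.2 ‖ξ‖ (norm_nonneg _)).1 (mem_Ici.2 le_rfl) (mem_Ici.2 ht) ht
  simp only at h2
  linarith

theorem bddAbove_outputWeights (hβ : IsClassKL β)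
    (hios : ∀ ξ u, IsInput u → BddInput u → ∀ t ∈ Ici (0:ℝ),
      ‖h (x t ξ u)‖ ≤ max (β ‖ξ‖ t) (g (uNorm u))) : BddAbove (outputWeights h x g ξ) :=
  ⟨_, fun _ hr => outputWeights_le hβ hios hr⟩

theorem outputSup_le (hx : IsSolutionMap f x) (hg0 : g 0 = 0) (hβ : IsClassKL β)
    (hios : ∀ ξ u, IsInput u → BddInput u → ∀ t ∈ Ici (0:ℝ),
      ‖h (x t ξ u)‖ ≤ max (β ‖ξ‖ t) (g (uNorm u))) : outputSup h x g ξ ≤ 2 * β ‖ξ‖ 0 :=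
  csSup_le (outputWeights_nonempty hx hg0) fun _ hr => outputWeights_le hβ hios hr

theorem norm_output_le_outputSup (hx : IsSolutionMap f x) (hg0 : g 0 = 0) (hβ : IsClassKL β)
    (hios : ∀ ξ u, IsInput u → BddInput u → ∀ t ∈ Ici (0:ℝ),
      ‖h (x t ξ u)‖ ≤ max (β ‖ξ‖ t) (g (uNorm u))) : ‖h ξ‖ / 2 ≤ outputSup h x g ξ := by
  rcases (norm_nonneg (h ξ)).eq_or_lt with h0 | h0
  · rw [← h0, zero_div]
    exact outputSup_nonneg
  · have hmem := outputWeight_initial_mem (h := h) (ξ := ξ) hx hg0 (half_pos h0)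
    refine le_trans ?_ (le_csSup (bddAbove_outputWeights hβ hios) hmem)
    rw [sub_half, min_self]
    exact le_max_right _ _

theorem exists_time_transient_lt (hβ : IsClassKL β) {R c : ℝ} (hR : 0 ≤ R) (hc : 0 < c) :
    ∃ T, 0 ≤ T ∧ ∀ t, T ≤ t → β R t < c := by
  obtain ⟨T, hT⟩ := eventually_atTop.1 ((hβ.2 R hR).2.eventually (gt_mem_nhds hc))
  exact ⟨max T 0, le_max_right _ _, fun t ht => hT t ((le_max_left _ _).trans ht)⟩

theorem outputSup_le_max_add
    (hf : LocallyLipschitz fun q : EuclideanSpace ℝ (Fin n) × EuclideanSpace ℝ (Fin m) =>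
      f q.1 q.2) (hh : LocallyLipschitz h) (hB : IsBIBS f x) (hg0 : g 0 = 0)
    (hgid : ∀ s, 0 ≤ s → s ≤ g s) (hβ : IsClassKL β)
    (hios : ∀ ξ u, IsInput u → BddInput u → ∀ t ∈ Ici (0:ℝ),
      ‖h (x t ξ u)‖ ≤ max (β ‖ξ‖ t) (g (uNorm u))) (R : ℝ) {c : ℝ} (hc : 0 < c) :
    ∃ L, 0 ≤ L ∧ ∀ ξ ζ, ‖ξ‖ ≤ R → ‖ζ‖ ≤ R →
      outputSup h x g ξ ≤ max (outputSup h x g ζ) c + L * ‖ξ - ζ‖ := by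
  rcases lt_or_ge R 0 with hR | hR
  · exact ⟨0, le_rfl, fun ξ ζ hξ => absurd (hξ.trans_lt hR) (norm_nonneg ξ).not_gt⟩
  obtain ⟨T, hT0, hT⟩ := exists_time_transient_lt hβ hR (half_pos hc)
  set A := β R 0 with hA
  have hA0 : 0 ≤ A := (hβ.1 0 (mem_Ici.2 le_rfl)).nonneg hR
  obtain ⟨σ, hσ, hbd⟩ := hB.2
  set R' := max (σ R) (σ A) with hR'
  obtain ⟨Lf, hLf0, hLf⟩ := exists_lipschitz_vectorField hf R' A
  obtain ⟨Lh, hLh0, hLh⟩ := exists_lipschitz_closedBall hh R'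
  refine ⟨2 * (Lh * Real.exp (Lf * T)), by positivity, fun ξ ζ hξ hζ => ?_⟩
  refine csSup_le (outputWeights_nonempty hB.1 hg0) fun r hr => ?_
  rcases le_or_gt r c with hrc | hrc
  · have : 0 ≤ 2 * (Lh * Real.exp (Lf * T)) * ‖ξ - ζ‖ := by positivity
    linarith [le_max_right (outputSup h x g ζ) c]
  obtain ⟨a, t, u, ha, ht, hu, hb, hga, rfl⟩ := hr
  have h1 := lt_transient_of_lt_outputWeight hβ hios hξ hc.le ht hu hb hga hrc
  have htT : t ≤ T := by
    by_contra! hlt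
    linarith [hT t hlt.le]
  have haA : uNorm u ≤ A := by
    have h2 := (hβ.2 R hR).1 (mem_Ici.2 le_rfl) (mem_Ici.2 ht) ht
    simp only at h2
    linarith [hgid _ (uNorm_nonneg u)]
  have hstate : ∀ η, ‖η‖ ≤ R → ∀ s ∈ Icc 0 t, ‖x s η u‖ ≤ R' := fun η hη s hs =>
    (hbd η u hu hb s hs.1).trans (max_le_max
      (hσ.monotoneOn (norm_nonneg _) hR hη) (hσ.monotoneOn (uNorm_nonneg u) hA0 haA))
  have h2 := (hB.isTraj hf hu hb ξ ht).norm_sub_le_mul_exp (hB.isTraj hf hu hb ζ ht) hLf0 hLf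
    (hstate ξ hξ) (hstate ζ hζ) (hb.ae_norm_le.mono fun s hs => hs.trans haA) (t := t) ⟨ht, le_rfl⟩
  simp only [hB.1.initial hu] at h2
  have h3 : ‖h (x t ξ u)‖ ≤ ‖h (x t ζ u)‖ + Lh * Real.exp (Lf * T) * ‖ξ - ζ‖ := by
    have h4 := hLh _ _ (hstate ξ hξ t ⟨ht, le_rfl⟩) (hstate ζ hζ t ⟨ht, le_rfl⟩)
    have h5 : ‖x t ξ u - x t ζ u‖ ≤ ‖ξ - ζ‖ * Real.exp (Lf * T) :=
      h2.trans (by gcongr)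
    have h6 := norm_sub_norm_le (h (x t ξ u)) (h (x t ζ u))
    have h7 := mul_le_mul_of_nonneg_left h5 hLh0
    nlinarith
  have h8 := outputWeight_le_add (a := a) ht h3 (by positivity)
  have h9 : outputWeight ‖h (x t ζ u)‖ a t ≤ outputSup h x g ζ :=
    le_csSup (bddAbove_outputWeights hβ hios) ⟨a, t, u, ha, ht, hu, hb, hga, rfl⟩
  linarith [le_max_left (outputSup h x g ζ) c]

theorem outputSup_decay
    (hf : LocallyLipschitz fun q : EuclideanSpace ℝ (Fin n) × EuclideanSpace ℝ (Fin m) =>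
      f q.1 q.2) (hB : IsBIBS f x) (hg : IsClassK g) (hβ : IsClassKL β)
    (hios : ∀ ξ u, IsInput u → BddInput u → ∀ t ∈ Ici (0:ℝ),
      ‖h (x t ξ u)‖ ≤ max (β ‖ξ‖ t) (g (uNorm u))) (R : ℝ) {c : ℝ} (hc : 0 < c) :
    ∃ δ, 0 < δ ∧ ∀ ζ μ, ‖ζ‖ ≤ R → c ≤ outputSup h x g ζ → g ‖μ‖ ≤ outputSup h x g ζ / 4 →
      ∀ τ ∈ Icc (0:ℝ) 1,
        outputSup h x g (x τ ζ fun _ => μ) ≤ outputSup h x g ζ - δ * τ := by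
  rcases lt_or_ge R 0 with hR | hR
  · exact ⟨1, one_pos, fun ζ μ hζ => absurd (hζ.trans_lt hR) (norm_nonneg ζ).not_gt⟩
  obtain ⟨T, hT0, hT⟩ := exists_time_transient_lt hβ hR (show 0 < 3 * c / 8 by positivity)
  refine ⟨min (c / 4) (3 * c / 8 / (1 + T) ^ 2), by positivity, fun ζ μ hζ hcv hμ τ hτ => ?_⟩
  set v := outputSup h x g ζ with hv
  refine csSup_le (outputWeights_nonempty hB.1 hg.2.2) fun r hr => ?_
  rcases le_or_gt r (3 * v / 4) with hrc | hrc
  · have : min (c / 4) (3 * c / 8 / (1 + T) ^ 2) * τ ≤ c / 4 * 1 :=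
      mul_le_mul (min_le_left _ _) hτ.2 hτ.1 (by positivity)
    linarith
  obtain ⟨a, t, u, ha, ht, hu, hb, hga, rfl⟩ := hr
  have hmin := lt_min_of_lt_outputWeight ht (by linarith) hrc
  rw [← hB.concat hf hu hb ζ μ hτ.1 ht] at hrc hmin ⊢
  set w := concatInput μ τ u with hw
  set y := ‖h (x (τ + t) ζ w)‖ with hy
  set b := min (y - a) a with hbdef
  have hb0 : 0 < b := by linarith
  have hgw : g (uNorm w) ≤ a := by
    have h1 := hg.monotoneOn (uNorm_nonneg w) (le_max_of_le_left (norm_nonneg μ))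
      (uNorm_concatInput_le hb μ τ)
    refine h1.trans ?_
    rcases max_choice ‖μ‖ (uNorm u) with h2 | h2 <;> rw [h2]
    · linarith [min_le_right (y - a) a]
    · exact hga
  have hwi := isInput_concatInput hu hb μ τ
  have hwb := bddInput_concatInput hb μ τ
  have hτt : 0 ≤ τ + t := add_nonneg hτ.1 ht
  have hle : outputWeight y a (τ + t) ≤ v :=
    le_csSup (bddAbove_outputWeights hβ hios) ⟨a, τ + t, w, ha, hτt, hwi, hwb, hgw, rfl⟩
  have hform : ∀ s, outputWeight y a s = b * (1 + s / (1 + s)) := fun s => by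
    rw [outputWeight, max_eq_right hb0.le]
  have hdiff : (1 + (τ + t) / (1 + (τ + t))) - (1 + t / (1 + t)) =
      τ / ((1 + t) * (1 + (τ + t))) := by
    have : 0 < 1 + t := by linarith
    have : 0 < 1 + (τ + t) := by linarith
    field_simp
    ring
  have hincr : outputWeight y a t ≤ outputWeight y a (τ + t) := by
    rw [hform, hform]
    refine mul_le_mul_of_nonneg_left ?_ hb0.le
    have : 0 ≤ τ / ((1 + t) * (1 + (τ + t))) := div_nonneg hτ.1 (by positivity)
    linarith
  have htT : τ + t ≤ T := by
    have h1 := lt_transient_of_lt_outputWeight hβ hios hζ (c := 3 * v / 4) (by linarith) hτt hwi hwb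
      hgw (hrc.trans_le hincr)
    by_contra! hlt
    linarith [hT _ hlt.le]
  have hgain : 3 * c / 8 / (1 + T) ^ 2 * τ ≤ b * (τ / ((1 + t) * (1 + (τ + t)))) := by
    have h1 : (1 + t) * (1 + (τ + t)) ≤ (1 + T) ^ 2 := by
      rw [sq]
      have := hτ.1
      exact mul_le_mul (by linarith) (by linarith) (by linarith) (by linarith)
    have h2 : τ / (1 + T) ^ 2 ≤ τ / ((1 + t) * (1 + (τ + t))) :=
      div_le_div_of_nonneg_left hτ.1 (by positivity) h1
    calc 3 * c / 8 / (1 + T) ^ 2 * τ = 3 * c / 8 * (τ / (1 + T) ^ 2) := by ring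
      _ ≤ b * (τ / ((1 + t) * (1 + (τ + t)))) :=
        mul_le_mul (by linarith) h2 (div_nonneg hτ.1 (by positivity)) hb0.le
  have hmul : min (c / 4) (3 * c / 8 / (1 + T) ^ 2) * τ ≤ 3 * c / 8 / (1 + T) ^ 2 * τ :=
    mul_le_mul_of_nonneg_right (min_le_right _ _) hτ.1
  rw [hform] at hle ⊢
  rw [← hdiff, mul_sub] at hgain
  linarith

end OutputSup

section Smoothing

variable {n m : ℕ}
  {f : EuclideanSpace ℝ (Fin n) → EuclideanSpace ℝ (Fin m) → EuclideanSpace ℝ (Fin n)}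
  {x : ℝ → EuclideanSpace ℝ (Fin n) → (ℝ → EuclideanSpace ℝ (Fin m)) → EuclideanSpace ℝ (Fin n)}
  {V : EuclideanSpace ℝ (Fin n) → ℝ} {g : ℝ → ℝ}

theorem abs_max_sub_max_le {E : Type*} [NormedAddCommGroup E] {V : E → ℝ} {R c L : ℝ}
    (hL0 : 0 ≤ L)
    (hL : ∀ ξ ζ, ‖ξ‖ ≤ R → ‖ζ‖ ≤ R → V ξ ≤ max (V ζ) c + L * ‖ξ - ζ‖)
    {a b : E} (ha : ‖a‖ ≤ R) (hb : ‖b‖ ≤ R) : |max (V a) c - max (V b) c| ≤ L * ‖a - b‖ := by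
  have key : ∀ a b, ‖a‖ ≤ R → ‖b‖ ≤ R → max (V a) c ≤ max (V b) c + L * ‖a - b‖ :=
    fun a b ha hb => max_le (hL a b ha hb)
      (by linarith [le_max_right (V b) c, mul_nonneg hL0 (norm_nonneg (a - b))])
  have h1 := key a b ha hb
  have h2 := key b a hb ha
  rw [norm_sub_rev] at h2
  exact abs_sub_le_iff.2 ⟨by linarith, by linarith⟩

theorem continuous_max_const {E : Type*} [NormedAddCommGroup E] {V : E → ℝ} {c : ℝ}
    (hL : ∀ R : ℝ, ∃ L, 0 ≤ L ∧
      ∀ ξ ζ, ‖ξ‖ ≤ R → ‖ζ‖ ≤ R → V ξ ≤ max (V ζ) c + L * ‖ξ - ζ‖) :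
    Continuous fun ξ => max (V ξ) c := by
  refine continuous_iff_continuousAt.2 fun ξ => ?_
  obtain ⟨L, hL0, hLip⟩ := hL (‖ξ‖ + 1)
  have hlim : Tendsto (fun ζ => L * ‖ζ - ξ‖) (𝓝 ξ) (𝓝 0) := by
    have : Continuous fun ζ => L * ‖ζ - ξ‖ := by fun_prop
    simpa using this.tendsto ξ
  rw [ContinuousAt, tendsto_iff_dist_tendsto_zero]
  refine squeeze_zero' (Eventually.of_forall fun _ => dist_nonneg) ?_ hlim
  filter_upwards [Metric.closedBall_mem_nhds ξ one_pos] with ζ hζ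
  refine abs_max_sub_max_le hL0 hLip ?_ (by linarith)
  have := norm_le_norm_add_norm_sub' ζ ξ
  rw [mem_closedBall_iff_norm] at hζ
  linarith

theorem exists_decay_along_vectorField
    (hf : LocallyLipschitz fun q : EuclideanSpace ℝ (Fin n) × EuclideanSpace ℝ (Fin m) =>
      f q.1 q.2) (hB : IsBIBS f x) (hgid : ∀ s, 0 ≤ s → s ≤ g s)
    (hbdd : ∀ R : ℝ, ∃ W, ∀ ξ, ‖ξ‖ ≤ R → V ξ ≤ W) {c : ℝ} (hc : 0 < c)
    (hLip : ∀ R : ℝ, ∃ L, 0 ≤ L ∧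
      ∀ ξ ζ, ‖ξ‖ ≤ R → ‖ζ‖ ≤ R → V ξ ≤ max (V ζ) c + L * ‖ξ - ζ‖)
    (hdec : ∀ R : ℝ, ∃ δ, 0 < δ ∧ ∀ ζ μ, ‖ζ‖ ≤ R → c ≤ V ζ → g ‖μ‖ ≤ V ζ / 4 →
      ∀ τ ∈ Icc (0:ℝ) 1, V (x τ ζ fun _ => μ) ≤ V ζ - δ * τ) (R : ℝ) (hR : 0 ≤ R) :
    ∃ δ ρ τ₀, 0 < δ ∧ 0 < ρ ∧ 0 < τ₀ ∧ ∀ ξ ζ μ, ‖ξ‖ ≤ R → ‖ζ - ξ‖ ≤ ρ → 2 * c ≤ V ξ →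
      8 * g ‖μ‖ ≤ V ξ → ∀ τ ∈ Ioo 0 τ₀,
        max (V (ζ + τ • f ξ μ)) c ≤ max (V ζ) c - δ * τ := by
  obtain ⟨W, hW⟩ := hbdd R
  set r := max W 0 with hr
  obtain ⟨σ, hσ, hbd⟩ := hB.2
  set R' := max (max (σ (R + 1)) (σ r)) (R + 2) with hR'
  obtain ⟨L, hL0, hL⟩ := hLip R'
  obtain ⟨δ, hδ, hdecay⟩ := hdec (R + 1)
  obtain ⟨Lf, hLf0, hLf⟩ := exists_lipschitz_vectorField hf R' r
  obtain ⟨F, hF0, hF⟩ := exists_bound_vectorField hf R' r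
  set ρ := min 1 (min (c / 2 / (L + 1)) (δ / 4 / (L * Lf + 1))) with hρ
  set τ₀ := min (min 1 (c / 2 / δ)) (min (1 / (F + 1)) (δ / 4 / (L * Lf * F + 1))) with hτ₀
  have hρ0 : 0 < ρ := by positivity
  have hτ0 : 0 < τ₀ := by positivity
  refine ⟨δ / 2, ρ, τ₀, by positivity, hρ0, hτ0, fun ξ ζ μ hξ hζ hcξ hμ τ hτ => ?_⟩
  have hρ1 : ρ ≤ 1 := min_le_left _ _
  have hρ2 : L * ρ ≤ c / 2 := by
    have : ρ ≤ c / 2 / (L + 1) := (min_le_right _ _).trans (min_le_left _ _)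
    rw [le_div_iff₀ (by positivity)] at this
    nlinarith
  have hρ3 : L * Lf * ρ ≤ δ / 4 := by
    have : ρ ≤ δ / 4 / (L * Lf + 1) := (min_le_right _ _).trans (min_le_right _ _)
    rw [le_div_iff₀ (by positivity)] at this
    nlinarith
  have hτ1 : τ ≤ 1 := hτ.2.le.trans ((min_le_left _ _).trans (min_le_left _ _))
  have hτ2 : δ * τ ≤ c / 2 := by
    have : τ ≤ c / 2 / δ := hτ.2.le.trans ((min_le_left _ _).trans (min_le_right _ _))
    rw [le_div_iff₀ hδ] at this
    linarith
  have hτ3 : F * τ ≤ 1 := by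
    have : τ ≤ 1 / (F + 1) := hτ.2.le.trans ((min_le_right _ _).trans (min_le_left _ _))
    rw [le_div_iff₀ (by positivity)] at this
    nlinarith [hτ.1]
  have hτ4 : L * Lf * F * τ ≤ δ / 4 := by
    have : τ ≤ δ / 4 / (L * Lf * F + 1) :=
      hτ.2.le.trans ((min_le_right _ _).trans (min_le_right _ _))
    rw [le_div_iff₀ (by positivity)] at this
    nlinarith [hτ.1]
  have hζR : ‖ζ‖ ≤ R + 1 := by linarith [norm_le_norm_add_norm_sub' ζ ξ]
  have hRR' : R + 2 ≤ R' := le_max_right _ _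
  have hμr : ‖μ‖ ≤ r := by
    have h1 := hgid ‖μ‖ (norm_nonneg _)
    have h2 := hW ξ hξ
    linarith [le_max_left W 0, norm_nonneg μ]
  have hVζ : V ξ ≤ V ζ + c / 2 := by
    have h1 := hL ξ ζ (by linarith) (by linarith)
    have h2 : L * ‖ξ - ζ‖ ≤ c / 2 := by
      rw [norm_sub_rev]
      exact (mul_le_mul_of_nonneg_left hζ hL0).trans hρ2
    rcases max_choice (V ζ) c with h3 | h3 <;> rw [h3] at h1 <;> linarith
  have hμi := isInput_const μ
  have hμb := bddInput_const μ
  have htraj := hB.isTraj hf hμi hμb ζ hτ.1.le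
  have hstate : ∀ s, 0 ≤ s → ‖x s ζ fun _ => μ‖ ≤ R' := fun s hs =>
    (hbd ζ _ hμi hμb s hs).trans ((max_le_max
      (hσ.monotoneOn (norm_nonneg _) (mem_Ici.2 (by linarith)) hζR)
      (hσ.monotoneOn (uNorm_nonneg _) (le_max_right W 0) ((uNorm_const_le μ).trans hμr))).trans
      (le_max_left _ _))
  have hstart : x 0 ζ (fun _ => μ) = ζ := hB.1.initial hμi
  have hclose : ∀ s ∈ Icc 0 τ, ‖x s ζ (fun _ => μ) - ζ‖ ≤ F * τ := by
    intro s hs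
    have h1 := htraj.sub_eq_integral ⟨le_rfl, hτ.1.le⟩ hs
    rw [hstart] at h1
    rw [h1]
    refine (intervalIntegral.norm_integral_le_of_norm_le_const (C := F) fun q hq => ?_).trans ?_
    · rw [uIoc_of_le hs.1] at hq
      exact hF _ _ (hstate q hq.1.le) hμr
    · rw [sub_zero, abs_of_nonneg hs.1]
      exact mul_le_mul_of_nonneg_left hs.2 hF0
  have hline : ‖x τ ζ (fun _ => μ) - (ζ + τ • f ξ μ)‖ ≤ Lf * (F * τ + ρ) * τ := by
    have h1 := htraj.sub_eq_integral ⟨le_rfl, hτ.1.le⟩ ⟨hτ.1.le, le_rfl⟩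
    rw [hstart] at h1
    have h2 : x τ ζ (fun _ => μ) - (ζ + τ • f ξ μ) =
        ∫ q in (0:ℝ)..τ, (f (x q ζ fun _ => μ) μ - f ξ μ) := by
      rw [intervalIntegral.integral_sub htraj.1 intervalIntegrable_const, ← h1,
        intervalIntegral.integral_const, sub_zero]
      abel
    rw [h2]
    refine (intervalIntegral.norm_integral_le_of_norm_le_const
      (C := Lf * (F * τ + ρ)) fun q hq => ?_).trans ?_
    · rw [uIoc_of_le hτ.1.le] at hq
      refine (hLf _ _ _ (hstate q hq.1.le) (by linarith) hμr).trans
        (mul_le_mul_of_nonneg_left ?_ hLf0)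
      have h3 := norm_sub_le_norm_sub_add_norm_sub (x q ζ fun _ => μ) ζ ξ
      linarith [hclose q ⟨hq.1.le, hq.2⟩]
    · rw [sub_zero, abs_of_nonneg hτ.1.le]
  have hdrop : max (V (x τ ζ fun _ => μ)) c ≤ max (V ζ) c - δ * τ := by
    have h1 := hdecay ζ μ hζR (by linarith) (by linarith) τ ⟨hτ.1.le, hτ1⟩
    have h2 : c ≤ V ζ - δ * τ := by linarith
    exact (max_le h1 h2).trans (sub_le_sub_right (le_max_left _ _) _)
  have hnorm : ‖ζ + τ • f ξ μ‖ ≤ R' := by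
    have h1 : ‖τ • f ξ μ‖ ≤ 1 := by
      rw [norm_smul, Real.norm_of_nonneg hτ.1.le, mul_comm]
      exact (mul_le_mul_of_nonneg_right (hF ξ μ (by linarith) hμr) hτ.1.le).trans hτ3
    linarith [norm_add_le ζ (τ • f ξ μ)]
  have hQ := (abs_sub_le_iff.1 (abs_max_sub_max_le hL0 hL (hstate τ hτ.1.le) hnorm)).2
  have h5 := mul_le_mul_of_nonneg_left hline hL0
  have h6 : (L * Lf * F * τ + L * Lf * ρ) * τ ≤ (δ / 4 + δ / 4) * τ :=
    mul_le_mul_of_nonneg_right (add_le_add hτ4 hρ3) hτ.1.le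
  nlinarith

/-- A smooth approximation of `max V c` which decreases along the vector field where `V` is not
small. -/
theorem exists_smooth_approx
    (hf : LocallyLipschitz fun q : EuclideanSpace ℝ (Fin n) × EuclideanSpace ℝ (Fin m) =>
      f q.1 q.2) (hB : IsBIBS f x) (hgid : ∀ s, 0 ≤ s → s ≤ g s)
    (hbdd : ∀ R : ℝ, ∃ W, ∀ ξ, ‖ξ‖ ≤ R → V ξ ≤ W) {c : ℝ} (hc : 0 < c)
    (hLip : ∀ R : ℝ, ∃ L, 0 ≤ L ∧
      ∀ ξ ζ, ‖ξ‖ ≤ R → ‖ζ‖ ≤ R → V ξ ≤ max (V ζ) c + L * ‖ξ - ζ‖)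
    (hdec : ∀ R : ℝ, ∃ δ, 0 < δ ∧ ∀ ζ μ, ‖ζ‖ ≤ R → c ≤ V ζ → g ‖μ‖ ≤ V ζ / 4 →
      ∀ τ ∈ Icc (0:ℝ) 1, V (x τ ζ fun _ => μ) ≤ V ζ - δ * τ) :
    ∃ M : EuclideanSpace ℝ (Fin n) → ℝ, ContDiff ℝ (⊤:ℕ∞) M ∧
      (∀ ξ, |M ξ - max (V ξ) c| ≤ c) ∧
      ∀ ξ μ, 2 * c ≤ V ξ → 8 * g ‖μ‖ ≤ V ξ → fderiv ℝ M ξ (f ξ μ) < 0 := by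
  choose δ ρ τ₀ hδ hρ hτ₀ hdecr using fun N : ℕ =>
    exists_decay_along_vectorField hf hB hgid hbdd hc hLip hdec (N + 1) (by positivity)
  choose L hL0 hL using fun N : ℕ => hLip (N + 3)
  choose W hW using fun N : ℕ => hbdd (N + 1)
  choose F hF0 hF using fun N : ℕ => exists_bound_vectorField hf (N + 1) (max (W N) 0)
  obtain ⟨ε, hεs, hε0, hε⟩ := exists_contDiff_pos_small (E := EuclideanSpace ℝ (Fin n))
    (e := fun N => min (min (1 / 2) (ρ N)) (min (c / (L N + 1)) (δ N / 2 / (L N * F N + 1))))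
    (fun N => by have := hL0 N; have := hF0 N; have := hρ N; have := hδ N; positivity)
  have hfloor : ∀ ξ : EuclideanSpace ℝ (Fin n), ‖ξ‖ < ⌊‖ξ‖⌋₊ + 1 := fun ξ => Nat.lt_floor_add_one _
  have hε1 : ∀ ξ, ε ξ ≤ 1 / 2 := fun ξ =>
    (hε ξ).1.trans ((min_le_left _ _).trans (min_le_left _ _))
  have hball : ∀ ξ : EuclideanSpace ℝ (Fin n), ∀ a ∈ Metric.closedBall ξ (1:ℝ),
      ‖a‖ ≤ (⌊‖ξ‖⌋₊ : ℝ) + 3 := fun ξ a ha => by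
    rw [mem_closedBall_iff_norm] at ha
    linarith [norm_le_norm_add_norm_sub' a ξ, hfloor ξ]
  have hQL : ∀ ξ, ∀ a ∈ Metric.closedBall ξ (1:ℝ), ∀ b ∈ Metric.closedBall ξ (1:ℝ),
      |max (V a) c - max (V b) c| ≤ L ⌊‖ξ‖⌋₊ * ‖a - b‖ := fun ξ a ha b hb =>
    abs_max_sub_max_le (hL0 _) (hL _) (hball ξ a ha) (hball ξ b hb)
  have hQ : Continuous fun ξ => max (V ξ) c := continuous_max_const hLip
  have hM := contDiff_mollify hQ hεs hε0 fun ξ => (hε1 ξ).trans (by norm_num)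
  refine ⟨mollify (fun ξ => max (V ξ) c) ε, hM, fun ξ => ?_, fun ξ μ hξ hμ => ?_⟩
  · refine abs_mollify_sub_le hQ (hε0 ξ) fun ζ hζ => ?_
    have hζ1 : ζ ∈ Metric.closedBall ξ (1:ℝ) :=
      Metric.closedBall_subset_closedBall ((hε1 ξ).trans (by norm_num)) hζ
    refine (hQL ξ ζ hζ1 ξ (Metric.mem_closedBall_self zero_le_one)).trans ?_
    rw [mem_closedBall_iff_norm] at hζ
    have h1 : ε ξ ≤ c / (L ⌊‖ξ‖⌋₊ + 1) :=
      (hε ξ).1.trans ((min_le_right _ _).trans (min_le_left _ _))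
    rw [le_div_iff₀ (by linarith [hL0 ⌊‖ξ‖⌋₊])] at h1
    nlinarith [hL0 ⌊‖ξ‖⌋₊, hε0 ξ, mul_le_mul_of_nonneg_left hζ (hL0 ⌊‖ξ‖⌋₊)]
  · set N := ⌊‖ξ‖⌋₊ with hN
    have hξN : ‖ξ‖ ≤ (N:ℝ) + 1 := (hfloor ξ).le
    have hμW : ‖μ‖ ≤ max (W N) 0 := by
      have h1 := hgid ‖μ‖ (norm_nonneg _)
      linarith [le_max_left (W N) 0, norm_nonneg μ, hW N ξ hξN]
    have hd := fderiv_mollify_le (Q := fun ξ => max (V ξ) c) (ε := ε) (ξ := ξ) (v := f ξ μ)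
      (δ := δ N) (ρ := 1) hQ hε0
      (hεs.differentiable (by simp) ξ) (hM.differentiable (by simp) ξ) (hτ₀ N) (hL0 N)
      ((hε1 ξ).trans_lt (by norm_num)) (fun ζ hζ τ hτ => hdecr N ξ ζ μ hξN (by
        rw [mem_closedBall_iff_norm] at hζ
        exact hζ.trans ((hε ξ).1.trans ((min_le_left _ _).trans (min_le_right _ _)))) hξ hμ τ hτ)
      (hQL ξ)
    refine hd.trans_lt ?_
    have h1 : ‖fderiv ℝ ε ξ‖ ≤ δ N / 2 / (L N * F N + 1) :=
      (hε ξ).2.trans ((min_le_right _ _).trans (min_le_right _ _))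
    have hLF : 0 ≤ L N * F N := mul_nonneg (hL0 N) (hF0 N)
    rw [le_div_iff₀ (by linarith)] at h1
    have h2 : |fderiv ℝ ε ξ (f ξ μ)| ≤ ‖fderiv ℝ ε ξ‖ * F N :=
      ((fderiv ℝ ε ξ).le_opNorm _).trans
        (mul_le_mul_of_nonneg_left (hF N ξ μ hξN hμW) (norm_nonneg _))
    have h3 := mul_le_mul_of_nonneg_left h2 (hL0 N)
    nlinarith [hδ N, norm_nonneg (fderiv ℝ ε ξ)]

end Smoothing

section Ramp

/-- A smooth increasing function which vanishes exactly on `(-∞,0]` and is unbounded. -/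
def smoothRamp (s : ℝ) : ℝ := s * expNegInvGlue s

theorem contDiff_smoothRamp : ContDiff ℝ (⊤:ℕ∞) smoothRamp :=
  contDiff_id.mul expNegInvGlue.contDiff

theorem smoothRamp_of_nonpos {s : ℝ} (hs : s ≤ 0) : smoothRamp s = 0 := by
  rw [smoothRamp, expNegInvGlue.zero_of_nonpos hs, mul_zero]

theorem smoothRamp_pos {s : ℝ} (hs : 0 < s) : 0 < smoothRamp s :=
  mul_pos hs (expNegInvGlue.pos_of_pos hs)

theorem smoothRamp_nonneg (s : ℝ) : 0 ≤ smoothRamp s := by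
  rcases le_or_gt s 0 with hs | hs
  · exact (smoothRamp_of_nonpos hs).ge
  · exact (smoothRamp_pos hs).le

theorem smoothRamp_of_pos {s : ℝ} (hs : 0 < s) : smoothRamp s = s * Real.exp (-s⁻¹) := by
  rw [smoothRamp, expNegInvGlue, if_neg hs.not_ge]

theorem smoothRamp_le {s : ℝ} (hs : 0 ≤ s) : smoothRamp s ≤ s := by
  rcases hs.eq_or_lt with h | h
  · rw [← h, smoothRamp_of_nonpos le_rfl]
  · rw [smoothRamp_of_pos h]
    refine mul_le_of_le_one_right hs (Real.exp_le_one_iff.2 ?_)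
    simpa using hs

theorem deriv_smoothRamp_of_nonpos {s : ℝ} (hs : s ≤ 0) : deriv smoothRamp s = 0 := by
  refine IsLocalMin.deriv_eq_zero (Eventually.of_forall fun t => ?_)
  rw [smoothRamp_of_nonpos hs]
  exact smoothRamp_nonneg t

theorem deriv_smoothRamp_pos {s : ℝ} (hs : 0 < s) : 0 < deriv smoothRamp s := by
  have h1 : smoothRamp =ᶠ[𝓝 s] fun t => t * Real.exp (-t⁻¹) := by
    filter_upwards [lt_mem_nhds hs] with t ht using smoothRamp_of_pos ht
  have h2 := (hasDerivAt_id s).mul (hasDerivAt_inv hs.ne').neg.exp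
  have h3 : deriv smoothRamp s = _ := h1.deriv_eq.trans h2.deriv
  rw [h3]
  have : 0 < Real.exp (-s⁻¹) := Real.exp_pos _
  simp only [id, neg_neg]
  positivity

theorem deriv_smoothRamp_nonneg (s : ℝ) : 0 ≤ deriv smoothRamp s := by
  rcases le_or_gt s 0 with hs | hs
  · exact (deriv_smoothRamp_of_nonpos hs).ge
  · exact (deriv_smoothRamp_pos hs).le

theorem monotone_smoothRamp : Monotone smoothRamp :=
  monotone_of_deriv_nonneg (contDiff_smoothRamp.differentiable (by simp)) deriv_smoothRamp_nonneg

theorem tendsto_smoothRamp_atTop : Tendsto smoothRamp atTop atTop := by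
  refine tendsto_atTop_mono' _ ?_ (tendsto_id.atTop_mul_const (Real.exp_pos (-1)))
  filter_upwards [eventually_ge_atTop (1:ℝ)] with s hs
  rw [smoothRamp_of_pos (by linarith)]
  refine mul_le_mul_of_nonneg_left (Real.exp_le_exp.2 (neg_le_neg ?_)) (by simp only [id]; linarith)
  exact inv_le_one_of_one_le₀ hs

end Ramp

section Assembly

variable {n m : ℕ}
  {f : EuclideanSpace ℝ (Fin n) → EuclideanSpace ℝ (Fin m) → EuclideanSpace ℝ (Fin n)}
  {V : EuclideanSpace ℝ (Fin n) → ℝ} {g : ℝ → ℝ}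

theorem exists_isClassKInfty_le_tsum_smoothRamp {a : ℕ → ℝ} (ha : ∀ k, 0 < a k)
    (hale : ∀ k, a k ≤ 1 / 2 / 2 ^ k) :
    ∃ α, IsClassKInfty α ∧ ∀ s, 0 ≤ s →
      (Summable fun k => a k * smoothRamp (s / 2 - 4 * (1 / 2) ^ k)) ∧
      α s ≤ ∑' k, a k * smoothRamp (s / 2 - 4 * (1 / 2) ^ k) := by
  have hterm : ∀ s k, smoothRamp (s / 2 - 4 * (1 / 2) ^ k) ≤ |s| := fun s k => by
    have h0 : (0:ℝ) < 4 * (1 / 2) ^ k := by positivity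
    refine (monotone_smoothRamp (?_ : _ ≤ |s|)).trans (smoothRamp_le (abs_nonneg s))
    have := le_abs_self s
    have := abs_nonneg s
    linarith
  have hsum : ∀ s, Summable fun k => a k * smoothRamp (s / 2 - 4 * (1 / 2) ^ k) := fun s => by
    refine Summable.of_nonneg_of_le (fun k => mul_nonneg (ha k).le (smoothRamp_nonneg _))
      (fun k => ?_) (hasSum_geometric_two' |s|).summable
    calc a k * smoothRamp (s / 2 - 4 * (1 / 2) ^ k) ≤ 1 / 2 / 2 ^ k * |s| :=
          mul_le_mul (hale k) (hterm s k) (smoothRamp_nonneg _) (by positivity)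
      _ = |s| / 2 / 2 ^ k := by ring
  set M : ℝ → ℝ := fun s => ∑' k, a k * smoothRamp (s / 2 - 4 * (1 / 2) ^ k) with hM
  have hnn : ∀ s k, 0 ≤ a k * smoothRamp (s / 2 - 4 * (1 / 2) ^ k) := fun s k =>
    mul_nonneg (ha k).le (smoothRamp_nonneg _)
  have hmono : Monotone M := fun s t hst => (hsum s).tsum_le_tsum
    (fun k => mul_le_mul_of_nonneg_left (monotone_smoothRamp (by linarith)) (ha k).le) (hsum t)
  have hpos : ∀ s, 0 < s → 0 < M s := fun s hs => by
    obtain ⟨k, hk⟩ := exists_pow_lt_of_lt_one (show 0 < s / 8 by positivity)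
      (show (1 / 2 : ℝ) < 1 by norm_num)
    exact (hsum s).tsum_pos (hnn s) k (mul_pos (ha k) (smoothRamp_pos (by linarith)))
  have htop : Tendsto M atTop atTop := by
    refine tendsto_atTop_mono (fun s => (hsum s).le_tsum 0 fun k _ => hnn s k) ?_
    refine Tendsto.const_mul_atTop (ha 0) (tendsto_smoothRamp_atTop.comp ?_)
    exact tendsto_atTop_add_const_right _ _ (tendsto_id.atTop_div_const two_pos)
  have h0 : 0 ≤ M 0 := tsum_nonneg (hnn 0)
  exact ⟨classKMinorant M, ⟨isClassK_classKMinorant hmono hpos, tendsto_classKMinorant hmono h0 htop⟩,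
    fun s hs => ⟨hsum s, classKMinorant_le hmono h0 hs⟩⟩

/-- Assembles smooth approximations of `max V c`, for `c` tending to `0`, into one smooth function
which strictly decreases along the vector field wherever it is positive. -/
theorem exists_smooth_lyapunov (hV : ∀ ξ, 0 ≤ V ξ)
    (happrox : ∀ c : ℝ, 0 < c → ∃ M : EuclideanSpace ℝ (Fin n) → ℝ, ContDiff ℝ (⊤:ℕ∞) M ∧
      (∀ ξ, |M ξ - max (V ξ) c| ≤ c) ∧
      ∀ ξ μ, 2 * c ≤ V ξ → 8 * g ‖μ‖ ≤ V ξ → fderiv ℝ M ξ (f ξ μ) < 0) :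
    ∃ P : EuclideanSpace ℝ (Fin n) → ℝ, ContDiff ℝ (⊤:ℕ∞) P ∧ (∀ ξ, 0 ≤ P ξ) ∧ (∀ ξ, P ξ ≤ V ξ) ∧
      (∃ α, IsClassKInfty α ∧ ∀ ξ s, 0 ≤ s → s / 2 ≤ V ξ → α s ≤ P ξ) ∧
      ∀ ξ (μ : EuclideanSpace ℝ (Fin m)), 0 < P ξ → 8 * g ‖μ‖ ≤ P ξ →
        fderiv ℝ P ξ (f ξ μ) < 0 := by
  have hc : ∀ k : ℕ, (0:ℝ) < (1 / 2) ^ k := fun k => by positivity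
  choose M hMs hMa hMd using fun k : ℕ => happrox ((1 / 2) ^ k) (hc k)
  set G : ℕ → EuclideanSpace ℝ (Fin n) → ℝ := fun k ξ => smoothRamp (M k ξ - 3 * (1 / 2) ^ k) with hG
  have hGs : ∀ k, ContDiff ℝ (⊤:ℕ∞) (G k) := fun k =>
    contDiff_smoothRamp.comp ((hMs k).sub contDiff_const)
  have hlarge : ∀ k ξ, 0 < M k ξ - 3 * (1 / 2) ^ k →
      2 * (1 / 2) ^ k ≤ V ξ ∧ M k ξ - 3 * (1 / 2) ^ k ≤ V ξ := fun k ξ hpos => by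
    have h1 := (abs_le.1 (hMa k ξ)).2
    have h2 := hc k
    rcases max_choice (V ξ) ((1 / 2) ^ k) with h3 | h3 <;> rw [h3] at h1
    · exact ⟨by linarith, by linarith⟩
    · linarith
  have hG0 : ∀ k ξ, 0 ≤ G k ξ := fun k ξ => smoothRamp_nonneg _
  have hGle : ∀ k ξ, G k ξ ≤ V ξ := fun k ξ => by
    rcases le_or_gt (M k ξ - 3 * (1 / 2) ^ k) 0 with hs | hs
    · exact (smoothRamp_of_nonpos hs).le.trans (hV ξ)
    · exact (smoothRamp_le hs.le).trans (hlarge k ξ hs).2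
  obtain ⟨d, hd0, hd⟩ := exists_coeff_contDiff_tsum hGs
  set a : ℕ → ℝ := fun k => min (d k) (1 / 2 / 2 ^ k) with ha
  have ha0 : ∀ k, 0 < a k := fun k => lt_min (hd0 k) (by positivity)
  obtain ⟨hPs, hP⟩ := hd a fun k => ⟨(ha0 k).le, min_le_left _ _⟩
  set P : EuclideanSpace ℝ (Fin n) → ℝ := fun ξ => ∑' k, a k * G k ξ with hPdef
  have hPle : ∀ ξ, P ξ ≤ V ξ := fun ξ => by
    refine hasSum_le (fun k => ?_) (hP ξ).1.hasSum (hasSum_geometric_two' (V ξ))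
    calc a k * G k ξ ≤ 1 / 2 / 2 ^ k * V ξ :=
          mul_le_mul (min_le_right _ _) (hGle k ξ) (hG0 k ξ) (by positivity)
      _ = V ξ / 2 / 2 ^ k := by ring
  refine ⟨P, hPs, fun ξ => tsum_nonneg fun k => mul_nonneg (ha0 k).le (hG0 k ξ), hPle, ?_, ?_⟩
  · obtain ⟨α, hα, hle⟩ := exists_isClassKInfty_le_tsum_smoothRamp ha0 fun k => min_le_right _ _
    refine ⟨α, hα, fun ξ s hs hsV => (hle s hs).2.trans ?_⟩
    refine (hle s hs).1.tsum_le_tsum (fun k => ?_) (hP ξ).1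
    refine mul_le_mul_of_nonneg_left (monotone_smoothRamp ?_) (ha0 k).le
    linarith [(abs_le.1 (hMa k ξ)).1, le_max_left (V ξ) ((1 / 2) ^ k)]
  · intro ξ μ hpos hμ
    have hGd : ∀ k, fderiv ℝ (G k) ξ (f ξ μ) =
        deriv smoothRamp (M k ξ - 3 * (1 / 2) ^ k) * fderiv ℝ (M k) ξ (f ξ μ) := fun k => by
      have h1 : HasFDerivAt (fun ξ => M k ξ - 3 * (1 / 2) ^ k) (fderiv ℝ (M k) ξ) ξ :=
        ((hMs k).differentiable (by simp) ξ).hasFDerivAt.sub_const _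
      have h2 := ((contDiff_smoothRamp.differentiable (by simp)
        (M k ξ - 3 * (1 / 2) ^ k)).hasDerivAt).comp_hasFDerivAt ξ h1
      have h3 : fderiv ℝ (G k) ξ = _ := h2.fderiv
      rw [h3]
      simp
    have hsum : HasSum (fun k => a k * fderiv ℝ (G k) ξ (f ξ μ)) (fderiv ℝ P ξ (f ξ μ)) := by
      rw [(hP ξ).2.2]
      exact ((hP ξ).2.1.hasSum.mapL (ContinuousLinearMap.apply ℝ ℝ (f ξ μ)))
    have hVμ : 8 * g ‖μ‖ ≤ V ξ := hμ.trans (hPle ξ)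
    have hneg : ∀ k, 0 < M k ξ - 3 * (1 / 2) ^ k → a k * fderiv ℝ (G k) ξ (f ξ μ) < 0 :=
      fun k hk => by
        rw [hGd]
        exact mul_neg_of_pos_of_neg (ha0 k) (mul_neg_of_pos_of_neg (deriv_smoothRamp_pos hk)
          (hMd k ξ μ (hlarge k ξ hk).1 hVμ))
    have hle : ∀ k, a k * fderiv ℝ (G k) ξ (f ξ μ) ≤ 0 := fun k => by
      rcases le_or_gt (M k ξ - 3 * (1 / 2) ^ k) 0 with hk | hk
      · rw [hGd, deriv_smoothRamp_of_nonpos hk, zero_mul, mul_zero]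
      · exact (hneg k hk).le
    obtain ⟨k, hk⟩ : ∃ k, 0 < M k ξ - 3 * (1 / 2) ^ k := by
      by_contra! hall
      have : P ξ = 0 := by
        simp only [hPdef, hG, smoothRamp_of_nonpos (hall _), mul_zero, tsum_zero]
      exact hpos.ne' this
    exact hasSum_lt hle (hneg k hk) hsum hasSum_zero

/-- A pointwise decrease condition can be quantified by a decay rate which is of class `K` in the
value of the function and nonincreasing in the norm of the state. -/
theorem exists_decay_rate {P : EuclideanSpace ℝ (Fin n) → ℝ} {χ : ℝ → ℝ}
    (hf : Continuous fun q : EuclideanSpace ℝ (Fin n) × EuclideanSpace ℝ (Fin m) => f q.1 q.2)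
    (hP : ContDiff ℝ (⊤:ℕ∞) P) (hP0 : ∀ ξ, 0 ≤ P ξ) (hχ : IsClassK χ)
    (hχid : ∀ s, 0 ≤ s → s ≤ χ s)
    (hneg : ∀ ξ (μ : EuclideanSpace ℝ (Fin m)), 0 < P ξ → χ ‖μ‖ ≤ P ξ →
      fderiv ℝ P ξ (f ξ μ) < 0) :
    ∃ α : ℝ → ℝ → ℝ, (∀ r ∈ Ici (0:ℝ), IsClassK fun s => α s r) ∧
      (∀ s ∈ Ici (0:ℝ), AntitoneOn (fun r => α s r) (Ici 0)) ∧
      ∀ ξ μ, χ ‖μ‖ ≤ P ξ → fderiv ℝ P ξ (f ξ μ) ≤ -α (P ξ) ‖ξ‖ := by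
  set S : ℝ → ℝ → Set ℝ := fun s r => insert 1 {d | ∃ ξ μ, ‖ξ‖ ≤ r ∧ s ≤ P ξ ∧ χ ‖μ‖ ≤ P ξ ∧
    d = -fderiv ℝ P ξ (f ξ μ)} with hS
  have hS0 : ∀ s r, ∀ d ∈ S s r, 0 ≤ d := by
    rintro s r d (rfl | ⟨ξ, μ, -, -, hμ, rfl⟩)
    · exact zero_le_one
    · rcases (hP0 ξ).eq_or_lt with h0 | h0
      · have : IsLocalMin P ξ := Eventually.of_forall fun ζ => h0 ▸ hP0 ζ
        rw [this.fderiv_eq_zero]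
        simp
      · linarith [hneg ξ μ h0 hμ]
  have hbdd : ∀ s r, BddBelow (S s r) := fun s r => ⟨0, fun d hd => hS0 s r d hd⟩
  have hne : ∀ s r, (S s r).Nonempty := fun s r => insert_nonempty _ _
  have hsub : ∀ {s s' r r'}, s ≤ s' → r' ≤ r → S s' r' ⊆ S s r := by
    rintro s s' r r' hs hr d (rfl | ⟨ξ, μ, h1, h2, h3, rfl⟩)
    · exact mem_insert _ _
    · exact mem_insert_of_mem _ ⟨ξ, μ, h1.trans hr, hs.trans h2, h3, rfl⟩
  have hmono : ∀ r, Monotone fun s => sInf (S s r) := fun r s s' hss =>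
    csInf_le_csInf (hbdd _ _) (hne _ _) (hsub hss le_rfl)
  have hnn : ∀ s r, 0 ≤ sInf (S s r) := fun s r => Real.sInf_nonneg (hS0 s r)
  have hpos : ∀ r s, 0 < s → 0 < sInf (S s r) := by
    intro r s hs
    set D : EuclideanSpace ℝ (Fin n) × EuclideanSpace ℝ (Fin m) → ℝ :=
      fun q => -fderiv ℝ P q.1 (f q.1 q.2) with hD
    have hDc : Continuous D :=
      ((hP.continuous_fderiv (by simp)).comp continuous_fst |>.clm_apply hf).neg
    obtain ⟨W, hW⟩ := (isCompact_closedBall (0 : EuclideanSpace ℝ (Fin n)) r).exists_bound_of_continuousOn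
      hP.continuous.continuousOn
    have hχc : Continuous fun μ : EuclideanSpace ℝ (Fin m) => χ ‖μ‖ :=
      hχ.1.comp_continuous continuous_norm fun μ => norm_nonneg μ
    set K : Set (EuclideanSpace ℝ (Fin n) × EuclideanSpace ℝ (Fin m)) :=
      (Metric.closedBall 0 r ×ˢ Metric.closedBall 0 W) ∩ ({q | s ≤ P q.1} ∩ {q | χ ‖q.2‖ ≤ P q.1})
      with hK
    have hKc : IsCompact K := by
      refine ((isCompact_closedBall _ _).prod (isCompact_closedBall _ _)).inter_right
        (IsClosed.inter ?_ ?_)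
      · exact isClosed_le continuous_const (hP.continuous.comp continuous_fst)
      · exact isClosed_le (hχc.comp continuous_snd) (hP.continuous.comp continuous_fst)
    have hmem : ∀ ξ μ, ‖ξ‖ ≤ r → s ≤ P ξ → χ ‖μ‖ ≤ P ξ → (ξ, μ) ∈ K := fun ξ μ h1 h2 h3 => by
      refine ⟨⟨by simpa using h1, ?_⟩, h2, h3⟩
      rw [mem_closedBall_zero_iff]
      refine (hχid _ (norm_nonneg μ)).trans (h3.trans ((le_abs_self _).trans (hW ξ ?_)))
      simpa using h1
    rcases K.eq_empty_or_nonempty with hKe | hKne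
    · refine zero_lt_one.trans_le (le_csInf (hne _ _) ?_)
      rintro d (rfl | ⟨ξ, μ, h1, h2, h3, rfl⟩)
      · exact le_rfl
      · exact absurd (hmem ξ μ h1 h2 h3) (hKe ▸ notMem_empty _)
    · obtain ⟨q, hq, hmin⟩ := hKc.exists_isMinOn hKne hDc.continuousOn
      have hDq : 0 < D q := by
        have := hneg q.1 q.2 (hs.trans_le hq.2.1) hq.2.2
        simp only [hD]
        linarith
      refine (lt_min one_pos hDq).trans_le (le_csInf (hne _ _) ?_)
      rintro d (rfl | ⟨ξ, μ, h1, h2, h3, rfl⟩)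
      · exact min_le_left _ _
      · exact (min_le_right _ _).trans (hmin (hmem ξ μ h1 h2 h3))
  refine ⟨fun s r => classKMinorant (fun s => sInf (S s r)) s, fun r _ =>
    isClassK_classKMinorant (hmono r) (hpos r), fun s hs r _ r' _ hrr => ?_, fun ξ μ hμ => ?_⟩
  · exact classKMinorant_mono (hmono r') (hmono r)
      (fun t => csInf_le_csInf (hbdd _ _) (hne _ _) (hsub le_rfl hrr)) hs
  · have h1 := classKMinorant_le (hmono ‖ξ‖) (hnn 0 ‖ξ‖) (hP0 ξ)
    have h2 : sInf (S (P ξ) ‖ξ‖) ≤ -fderiv ℝ P ξ (f ξ μ) :=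
      csInf_le (hbdd _ _) (mem_insert_of_mem _ ⟨ξ, μ, le_rfl, le_rfl, hμ, rfl⟩)
    linarith

end Assembly

section Converse

variable {n m p : ℕ}

theorem IsIOS.exists_isIOSLyapunov
    {f : EuclideanSpace ℝ (Fin n) → EuclideanSpace ℝ (Fin m) → EuclideanSpace ℝ (Fin n)}
    {h : EuclideanSpace ℝ (Fin n) → EuclideanSpace ℝ (Fin p)}
    {x : ℝ → EuclideanSpace ℝ (Fin n) → (ℝ → EuclideanSpace ℝ (Fin m)) →
      EuclideanSpace ℝ (Fin n)}
    (hf : LocallyLipschitz fun q : EuclideanSpace ℝ (Fin n) × EuclideanSpace ℝ (Fin m) =>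
      f q.1 q.2) (hh : LocallyLipschitz h) (hB : IsBIBS f x) (hios : IsIOS h x) :
    ∃ V : EuclideanSpace ℝ (Fin n) → ℝ, IsIOSLyapunov f h V := by
  obtain ⟨β, γ, hβ, hγ, hest⟩ := hios
  set g : ℝ → ℝ := fun s => γ s + s with hgdef
  have hg : IsClassK g :=
    ⟨hγ.1.add continuousOn_id, hγ.2.1.add strictMonoOn_id, by simp [hgdef, hγ.2.2]⟩
  have hgid : ∀ s, 0 ≤ s → s ≤ g s := fun s hs => by
    have := hγ.nonneg hs
    simp only [hgdef]
    linarith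
  have hest' : ∀ ξ u, IsInput u → BddInput u → ∀ t ∈ Ici (0:ℝ),
      ‖h (x t ξ u)‖ ≤ max (β ‖ξ‖ t) (g (uNorm u)) := fun ξ u hu hb t ht =>
    (hest ξ u hu hb t ht).trans (max_le_max le_rfl (by
      simp only [hgdef]
      linarith [uNorm_nonneg u]))
  have hβ0 := hβ.1 0 (mem_Ici.2 le_rfl)
  have hVle : ∀ ξ, outputSup h x g ξ ≤ 2 * β ‖ξ‖ 0 := fun ξ => outputSup_le hB.1 hg.2.2 hβ hest'
  obtain ⟨P, hPs, hP0, hPV, ⟨α, hα, hαP⟩, hneg⟩ :=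
    exists_smooth_lyapunov (f := f) (V := outputSup h x g) (g := g) (fun ξ => outputSup_nonneg)
      fun c hc => exists_smooth_approx hf hB hgid
        (fun R => ⟨2 * β R 0, fun ξ hξ => (hVle ξ).trans (by
          have := hβ0.monotoneOn (norm_nonneg ξ) ((norm_nonneg ξ).trans hξ) hξ
          linarith)⟩) hc
        (fun R => outputSup_le_max_add hf hh hB hg.2.2 hgid hβ hest' R hc)
        (fun R => outputSup_decay hf hB hg hβ hest' R hc)
  have hχ : IsClassK fun s => 8 * g s :=
    ⟨continuousOn_const.mul hg.1, fun s hs t ht hst => by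
      have := hg.2.1 hs ht hst
      simp only
      linarith, by simp [hg.2.2]⟩
  have hχid : ∀ s, 0 ≤ s → s ≤ 8 * g s := fun s hs => by linarith [hgid s hs]
  obtain ⟨α₃, h1, h2, h3⟩ := exists_decay_rate hf.continuous hPs hP0 hχ hχid hneg
  refine ⟨P, hPs, hP0, ⟨α, fun s => 2 * β s 0 + s, hα, ⟨⟨?_, ?_, ?_⟩, ?_⟩, fun ξ => ⟨?_, ?_⟩⟩,
    fun s => 8 * g s, hχ, α₃, h1, h2, h3⟩
  · exact (continuousOn_const.mul hβ0.1).add continuousOn_id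
  · intro s hs t ht hst
    have := hβ0.2.1 hs ht hst
    simp only at this ⊢
    linarith
  · have := hβ0.2.2
    simp only at this
    simp [this]
  · refine tendsto_atTop_mono' _ ?_ tendsto_id
    filter_upwards [eventually_ge_atTop (0:ℝ)] with s hs
    have := hβ0.nonneg hs
    simp only [id] at this ⊢
    linarith
  · exact hαP ξ _ (norm_nonneg _) (norm_output_le_outputSup hB.1 hg.2.2 hβ hest')
  · linarith [hPV ξ, hVle ξ, norm_nonneg ξ]

end Converse

section Fencing

variable {v : ℝ → ℝ} {a b c d : ℝ}

theorem le_const_of_slope_lt (hv : ContinuousOn v (Icc a b))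
    (hfin : ∀ t ∈ Ico a b, ∃ K, ∀ r, K < r → ∃ᶠ z in 𝓝[>] t, slope v t z < r)
    (hd : 0 < d)
    (hdec : ∀ t ∈ Ico a b, c ≤ v t → ∀ r, -d < r → ∃ᶠ z in 𝓝[>] t, slope v t z < r)
    (ha : v a ≤ c) {t : ℝ} (ht : t ∈ Icc a b) : v t ≤ c := by
  classical
  choose! K hK using hfin
  refine image_le_of_liminf_slope_right_lt_deriv_boundary
    (f' := fun t => if c ≤ v t then -d else K t) (B := fun _ => c) (B' := fun _ => 0) hv
    (fun s hs r hr => ?_) ha (fun s => hasDerivAt_const s c) (fun s hs hsc => ?_) ht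
  · split_ifs at hr with hcs
    · exact hdec s hs hcs r hr
    · exact hK s hs r hr
  · rw [if_pos hsc.ge]
    linarith

/-- A continuous function whose upper right derivative is at most `-d` above the level `c`
decreases linearly until it reaches that level. -/
theorem le_max_of_slope_lt (hv : ContinuousOn v (Icc a b))
    (hfin : ∀ t ∈ Ico a b, ∃ K, ∀ r, K < r → ∃ᶠ z in 𝓝[>] t, slope v t z < r)
    (hd : 0 < d)
    (hdec : ∀ t ∈ Ico a b, c ≤ v t → ∀ r, -d < r → ∃ᶠ z in 𝓝[>] t, slope v t z < r)
    (hab : a ≤ b) : v b ≤ max c (v a - d / 2 * (b - a)) := by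
  rcases le_or_gt (v b) c with hbc | hbc
  · exact hbc.trans (le_max_left _ _)
  refine le_trans ?_ (le_max_right _ _)
  have habove : ∀ t ∈ Icc a b, c < v t := by
    intro t ht
    by_contra! hle
    have hsub : Ico t b ⊆ Ico a b := Ico_subset_Ico_left ht.1
    exact hbc.not_ge (le_const_of_slope_lt (hv.mono (Icc_subset_Icc_left ht.1))
      (fun s hs => hfin s (hsub hs)) hd (fun s hs => hdec s (hsub hs)) hle ⟨ht.2, le_rfl⟩)
  refine image_le_of_liminf_slope_right_lt_deriv_boundary
    (f' := fun _ => -d) (B := fun s => v a - d / 2 * (s - a)) (B' := fun _ => -(d / 2)) hv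
    (fun s hs => hdec s hs (habove s (Ico_subset_Icc_self hs)).le) (by simp) (fun s => ?_)
    (fun s _ _ => by linarith) ⟨hab, le_rfl⟩
  simpa using (((hasDerivAt_id s).sub_const a).const_mul (d / 2)).const_sub (v a)

end Fencing

section Direct

variable {n m p : ℕ}
  {f : EuclideanSpace ℝ (Fin n) → EuclideanSpace ℝ (Fin m) → EuclideanSpace ℝ (Fin n)}
  {h : EuclideanSpace ℝ (Fin n) → EuclideanSpace ℝ (Fin p)}
  {x : ℝ → EuclideanSpace ℝ (Fin n) → (ℝ → EuclideanSpace ℝ (Fin m)) → EuclideanSpace ℝ (Fin n)}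
  {V : EuclideanSpace ℝ (Fin n) → ℝ}

theorem IsTraj.eventually_slope_lt {w : ℝ → EuclideanSpace ℝ (Fin m)} {T R r κ q t : ℝ}
    {X : ℝ → EuclideanSpace ℝ (Fin n)}
    (hf : LocallyLipschitz fun q : EuclideanSpace ℝ (Fin n) × EuclideanSpace ℝ (Fin m) =>
      f q.1 q.2) (hX : IsTraj f w T X) (ht : t ∈ Ico 0 T)
    (hXR : ∀ t ∈ Icc 0 T, ‖X t‖ ≤ R)
    (hw : ∀ᵐ t ∂(volume.restrict (Ici (0:ℝ))), ‖w t‖ ≤ r) (hV : DifferentiableAt ℝ V (X t))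
    (hκ : ∀ᵐ s ∂(volume.restrict (Ici (0:ℝ))), fderiv ℝ V (X t) (f (X t) (w s)) ≤ κ)
    (hq : κ < q) : ∀ᶠ z in 𝓝[>] t, slope (fun s => V (X s)) t z < q := by
  obtain ⟨L, hL0, hL⟩ := exists_lipschitz_vectorField hf R r
  obtain ⟨F, hF0, hF⟩ := exists_bound_vectorField hf R r
  set A := fderiv ℝ V (X t) with hA
  set ε := q - κ with hε
  have hε0 : 0 < ε := sub_pos.2 hq
  have hTt : t ∈ Icc 0 T := Ico_subset_Icc_self ht
  have hT : 0 ≤ T := ht.1.trans ht.2.le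
  have hcont : Tendsto X (𝓝[>] t) (𝓝 (X t)) := by
    have h1 : ContinuousWithinAt X (Icc 0 T) t := hX.continuousOn hT t hTt
    refine (h1.mono_of_mem_nhdsWithin ?_ : ContinuousWithinAt X (Ioi t) t)
    filter_upwards [self_mem_nhdsWithin, mem_nhdsWithin_of_mem_nhds (Iio_mem_nhds ht.2)]
      with z hz hz'
    exact ⟨ht.1.trans (le_of_lt hz), le_of_lt hz'⟩
  have hlin := hcont.eventually (hV.hasFDerivAt.isLittleO.def
    (show 0 < ε / 4 / (F + 1) by positivity))
  have hsmall : ∀ᶠ z in 𝓝[>] t, ‖A‖ * (L * F) * (z - t) < ε / 4 := by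
    have : Continuous fun z => ‖A‖ * (L * F) * (z - t) := by fun_prop
    have h1 := this.tendsto t
    simp only [sub_self, mul_zero] at h1
    exact mem_nhdsWithin_of_mem_nhds (h1.eventually (gt_mem_nhds (by positivity)))
  filter_upwards [hlin, hsmall, self_mem_nhdsWithin,
    mem_nhdsWithin_of_mem_nhds (Iio_mem_nhds ht.2)] with z h1 h2 hzt hzT
  have hz : t < z := hzt
  have hzI : z ∈ Icc 0 T := ⟨ht.1.trans hz.le, le_of_lt hzT⟩
  have hIcc : ∀ s ∈ Icc t z, s ∈ Icc 0 T := fun s hs => ⟨ht.1.trans hs.1, hs.2.trans hzI.2⟩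
  have hwt : ∀ᵐ s ∂(volume.restrict (Icc t z)),
      ‖w s‖ ≤ r ∧ fderiv ℝ V (X t) (f (X t) (w s)) ≤ κ :=
    ae_restrict_of_ae_restrict_of_subset (fun s hs => ht.1.trans hs.1) (hw.and hκ)
  have hincr : ∀ s ∈ Icc t z, ‖X s - X t‖ ≤ F * (s - t) := by
    intro s hs
    rw [hX.sub_eq_integral hTt (hIcc s hs)]
    have h3 : (∫ q in t..s, (F : ℝ)) = F * (s - t) := by
      rw [intervalIntegral.integral_const, smul_eq_mul, mul_comm]
    rw [← h3]
    refine intervalIntegral.norm_integral_le_of_norm_le hs.1 ?_ intervalIntegrable_const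
    filter_upwards [(ae_restrict_iff' measurableSet_Ici).1 hw] with q hq hqs
    exact hF _ _ (hXR q (hIcc q ⟨hqs.1.le, hqs.2.trans hs.2⟩)) (hq (ht.1.trans hqs.1.le))
  have hfi : IntervalIntegrable (fun s => f (X s) (w s)) volume t z :=
    hX.1.mono_set (by
      rw [uIcc_of_le hz.le, uIcc_of_le hT]; exact hIcc)
  have hAle : A (X z - X t) ≤ (κ + ‖A‖ * (L * F) * (z - t)) * (z - t) := by
    rw [hX.sub_eq_integral hTt hzI, ← A.intervalIntegral_comp_comm hfi]
    have h3 : (∫ q in t..z, (κ + ‖A‖ * (L * F) * (z - t) : ℝ)) =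
        (κ + ‖A‖ * (L * F) * (z - t)) * (z - t) := by
      rw [intervalIntegral.integral_const, smul_eq_mul, mul_comm]
    rw [← h3]
    refine intervalIntegral.integral_mono_ae_restrict hz.le
      ⟨A.integrable_comp hfi.1, A.integrable_comp hfi.2⟩ intervalIntegrable_const ?_
    filter_upwards [hwt, ae_restrict_mem measurableSet_Icc] with s hs hst
    have h4 : A (f (X s) (w s)) = A (f (X t) (w s)) + A (f (X s) (w s) - f (X t) (w s)) := by
      rw [map_sub]; ring
    have h5 : ‖f (X s) (w s) - f (X t) (w s)‖ ≤ L * F * (z - t) := by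
      refine (hL _ _ _ (hXR s (hIcc s hst)) (hXR t hTt) hs.1).trans ?_
      rw [mul_assoc]
      refine mul_le_mul_of_nonneg_left ((hincr s hst).trans ?_) hL0
      exact mul_le_mul_of_nonneg_left (by linarith [hst.2]) hF0
    have h6 : A (f (X s) (w s) - f (X t) (w s)) ≤ ‖A‖ * (L * F * (z - t)) :=
      (le_abs_self _).trans ((A.le_opNorm _).trans (mul_le_mul_of_nonneg_left h5 (norm_nonneg _)))
    rw [h4]
    linarith [hs.2]
  have hrem : V (X z) - V (X t) - A (X z - X t) ≤ ε / 4 * (z - t) := by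
    refine (le_abs_self _).trans (h1.trans ?_)
    have h3 := hincr z ⟨hz.le, le_rfl⟩
    calc ε / 4 / (F + 1) * ‖X z - X t‖ ≤ ε / 4 / (F + 1) * ((F + 1) * (z - t)) := by
          refine mul_le_mul_of_nonneg_left (h3.trans ?_) (by positivity)
          nlinarith
      _ = ε / 4 * (z - t) := by field_simp
  have hzt0 : 0 < z - t := sub_pos.2 hz
  rw [slope_def_field, div_lt_iff₀ hzt0]
  have h7 : (κ + ‖A‖ * (L * F) * (z - t)) * (z - t) ≤ (κ + ε / 4) * (z - t) :=
    mul_le_mul_of_nonneg_right (by linarith) hzt0.le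
  nlinarith [mul_pos hε0 hzt0]

variable {χ : ℝ → ℝ} {α₃ : ℝ → ℝ → ℝ} {u : ℝ → EuclideanSpace ℝ (Fin m)}
  {ξ : EuclideanSpace ℝ (Fin n)}

theorem lyapunov_le_max
    (hf : LocallyLipschitz fun q : EuclideanSpace ℝ (Fin n) × EuclideanSpace ℝ (Fin m) =>
      f q.1 q.2) (hB : IsBIBS f x) (hV : ContDiff ℝ (⊤:ℕ∞) V)
    (hχ : IsClassK χ) (hα : ∀ r ∈ Ici (0:ℝ), IsClassK fun s => α₃ s r)
    (hanti : ∀ s ∈ Ici (0:ℝ), AntitoneOn (fun r => α₃ s r) (Ici 0))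
    (hdec : ∀ ξ μ, χ ‖μ‖ ≤ V ξ → fderiv ℝ V ξ (f ξ μ) ≤ -α₃ (V ξ) ‖ξ‖)
    (hu : IsInput u) (hb : BddInput u) {R c t : ℝ} (hR : ∀ s, 0 ≤ s → ‖x s ξ u‖ ≤ R)
    (hc : 0 < c) (hχc : χ (uNorm u) ≤ c) (ht : 0 ≤ t) :
    V (x t ξ u) ≤ max c (V ξ - α₃ c R / 2 * t) := by
  have hR0 : 0 ≤ R := (norm_nonneg _).trans (hR 0 le_rfl)
  have htraj := hB.isTraj hf hu hb ξ (T := t) ht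
  obtain ⟨F, -, hF⟩ := exists_bound_vectorField hf R (uNorm u)
  have hdiff : Differentiable ℝ V := hV.differentiable (by simp)
  have key := le_max_of_slope_lt (v := fun s => V (x s ξ u)) (a := 0) (b := t) (c := c)
    (d := α₃ c R) (hV.continuous.comp_continuousOn (htraj.continuousOn ht)) (fun s hs => ?_)
    ((hα R hR0).pos hc) (fun s hs hcs r hr => ?_) ht
  · simpa [hB.1.initial hu] using key
  · refine ⟨‖fderiv ℝ V (x s ξ u)‖ * F, fun r hr => Eventually.frequently ?_⟩
    refine htraj.eventually_slope_lt hf hs (fun s hs => hR s hs.1) hb.ae_norm_le (hdiff _) ?_ hr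
    filter_upwards [hb.ae_norm_le] with q hq
    exact (le_abs_self _).trans (((fderiv ℝ V (x s ξ u)).le_opNorm _).trans
      (mul_le_mul_of_nonneg_left (hF _ _ (hR s hs.1) hq) (norm_nonneg _)))
  · refine Eventually.frequently ?_
    refine htraj.eventually_slope_lt hf hs (fun s hs => hR s hs.1) hb.ae_norm_le (hdiff _) ?_ hr
    filter_upwards [hb.ae_norm_le] with q hq
    have h1 : χ ‖u q‖ ≤ V (x s ξ u) :=
      (hχ.monotoneOn (norm_nonneg _) (uNorm_nonneg u) hq).trans (hχc.trans hcs)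
    have h2 := hanti _ (hc.le.trans hcs) (norm_nonneg _) hR0 (hR s hs.1)
    have h3 := (hα R hR0).monotoneOn hc.le (hc.le.trans hcs) hcs
    have h4 := hdec _ _ h1
    simp only at h2 h3
    linarith

theorem exists_isClassK_inverse_ge {α g : ℝ → ℝ} (hα : IsClassKInfty α)
    (hg : MonotoneOn g (Ici 0)) (hg0 : Tendsto g (𝓝[>] 0) (𝓝 0)) :
    ∃ γ, IsClassK γ ∧ ∀ r s, 0 ≤ r → 0 ≤ s → α s ≤ g r → s ≤ γ r := by
  set S : ℝ → Set ℝ := fun r => {s | 0 ≤ s ∧ α s ≤ g (max r 0)} with hS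
  have hbdd : ∀ r, BddAbove (S r) := fun r => by
    obtain ⟨B, hB⟩ := eventually_atTop.1 (hα.2.eventually_gt_atTop (g (max r 0)))
    exact ⟨B, fun s hs => not_lt.1 fun hlt => hs.2.not_gt (hB s hlt.le)⟩
  have hsub : ∀ {r r'}, r ≤ r' → S r ⊆ S r' := fun {r r'} hr s hs =>
    ⟨hs.1, hs.2.trans (hg (mem_Ici.2 (le_max_right _ _)) (mem_Ici.2 (le_max_right _ _))
      (max_le_max hr le_rfl))⟩
  have hnn : ∀ r, 0 ≤ sSup (S r) := fun r => Real.sSup_nonneg fun s hs => hs.1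
  have hmono : Monotone fun r => sSup (S r) := fun r r' hr => by
    rcases (S r).eq_empty_or_nonempty with he | hne
    · simp only [he, Real.sSup_empty]
      exact hnn r'
    · exact csSup_le_csSup (hbdd r') hne (hsub hr)
  have hzero : Tendsto (fun r => sSup (S r)) (𝓝[>] 0) (𝓝 0) := by
    refine tendsto_order.2 ⟨fun a ha => Eventually.of_forall fun r => ha.trans_le (hnn r),
      fun a ha => ?_⟩
    filter_upwards [hg0.eventually (gt_mem_nhds (hα.1.pos (half_pos ha))), self_mem_nhdsWithin]
      with r hr hr0
    refine (Real.sSup_le (fun s hs => ?_) (half_pos ha).le).trans_lt (half_lt_self ha)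
    have h1 := hs.2
    rw [max_eq_left (le_of_lt hr0)] at h1
    exact ((hα.1.2.1.lt_iff_lt hs.1 (half_pos ha).le).1 (h1.trans_lt hr)).le
  obtain ⟨γ, hγ, hle⟩ := exists_isClassK_ge hmono hnn hzero
  refine ⟨γ, hγ, fun r s hr hs hsr => (le_csSup (hbdd r) ⟨hs, ?_⟩).trans (hle r hr)⟩
  rwa [max_eq_left hr]

theorem IsIOSLyapunov.isIOS
    (hf : LocallyLipschitz fun q : EuclideanSpace ℝ (Fin n) × EuclideanSpace ℝ (Fin m) =>
      f q.1 q.2) (hB : IsBIBS f x) (hL : IsIOSLyapunov f h V) : IsIOS h x := by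
  obtain ⟨hV, hV0, ⟨α₁, α₂, hα₁, hα₂, hbounds⟩, χ, hχ, α₃, hα₃, hanti, hdec⟩ := hL
  obtain ⟨σ, hσ, hσb⟩ := hB.2
  set g : ℝ → ℝ := fun r => max (χ r) (α₂ r) with hg
  have hgmono : MonotoneOn g (Ici 0) := fun a ha b hb hab =>
    max_le_max (hχ.monotoneOn ha hb hab) (hα₂.1.monotoneOn ha hb hab)
  have hg0 : Tendsto g (𝓝[>] 0) (𝓝 0) := by
    simpa using hχ.tendsto_zero.max hα₂.1.tendsto_zero
  obtain ⟨γ, hγ, hγle⟩ := exists_isClassK_inverse_ge hα₁ hgmono hg0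
  have hest : ∀ ξ u, IsInput u → BddInput u → ∀ c t, 0 < c → χ (uNorm u) ≤ c → 0 ≤ t →
      V (x t ξ u) ≤ max c (V ξ - α₃ c (max (σ ‖ξ‖) (σ (uNorm u))) / 2 * t) :=
    fun ξ u hu hb c t hc hχc ht =>
      lyapunov_le_max hf hB hV hχ hα₃ hanti hdec hu hb (hσb ξ u hu hb) hc hχc ht
  have hsmall : ∀ ξ u, IsInput u → BddInput u → ∀ t, 0 ≤ t → g (uNorm u) < V (x t ξ u) →
      V (x t ξ u) ≤ α₂ ‖ξ‖ := by
    intro ξ u hu hb t ht hlt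
    have h1 : V (x t ξ u) ≤ max (α₂ ‖ξ‖) (χ (uNorm u)) := by
      refine le_of_forall_pos_le_add fun ε hε => ?_
      have hα0 : 0 ≤ α₂ ‖ξ‖ := hα₂.1.nonneg (norm_nonneg _)
      have hc : 0 < max (α₂ ‖ξ‖) (χ (uNorm u)) + ε := by
        linarith [le_max_left (α₂ ‖ξ‖) (χ (uNorm u))]
      refine (hest ξ u hu hb _ t hc (by linarith [le_max_right (α₂ ‖ξ‖) (χ (uNorm u))]) ht).trans
        (max_le le_rfl ?_)
      have h2 := (hα₃ (max (σ ‖ξ‖) (σ (uNorm u)))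
        (le_max_of_le_left (hσ.nonneg (norm_nonneg _)))).nonneg hc.le
      have h3 := mul_nonneg (div_nonneg h2 zero_le_two) ht
      linarith [(hbounds ξ).2, le_max_left (α₂ ‖ξ‖) (χ (uNorm u))]
    rcases le_max_iff.1 h1 with h2 | h2
    · exact h2
    · exact absurd (h2.trans (le_max_left _ _)) hlt.not_ge
  set S : ℝ → ℝ → Set ℝ := fun s t => insert 0 {y | ∃ t' ξ u, 0 ≤ t' ∧ t ≤ t' ∧ ‖ξ‖ ≤ s ∧
    IsInput u ∧ BddInput u ∧ g (uNorm u) < V (x t' ξ u) ∧ y = ‖h (x t' ξ u)‖} with hS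
  have hSsub : ∀ {s s' t t'}, s ≤ s' → t' ≤ t → S s t ⊆ S s' t' := by
    rintro s s' t t' hs ht y (rfl | ⟨q, ξ, u, h1, h2, h3, h4⟩)
    · exact mem_insert _ _
    · exact mem_insert_of_mem _ ⟨q, ξ, u, h1, ht.trans h2, h3.trans hs, h4⟩
  have hSα : ∀ s t, ∀ y ∈ S s t, 0 ≤ y ∧ (y = 0 ∨ α₁ y ≤ α₂ s) := by
    rintro s t y (rfl | ⟨q, ξ, u, h1, h2, h3, h4, h5, h6, rfl⟩)
    · exact ⟨le_rfl, Or.inl rfl⟩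
    · exact ⟨norm_nonneg _, Or.inr ((hbounds _).1.trans ((hsmall ξ u h4 h5 q h1 h6).trans
        (hα₂.1.monotoneOn (norm_nonneg _) ((norm_nonneg ξ).trans h3) h3)))⟩
  have hSbdd : ∀ s t, BddAbove (S s t) := fun s t => by
    obtain ⟨B, hB'⟩ := eventually_atTop.1 (hα₁.2.eventually_gt_atTop (α₂ s))
    refine ⟨max B 0, fun y hy => ?_⟩
    rcases (hSα s t y hy).2 with h1 | h1
    · exact h1.le.trans (le_max_right _ _)
    · exact (not_lt.1 fun hlt => h1.not_gt (hB' y hlt.le)).trans (le_max_left _ _)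
  have hSne : ∀ s t, (S s t).Nonempty := fun s t => insert_nonempty _ _
  have hSnn : ∀ s t, 0 ≤ sSup (S s t) := fun s t => Real.sSup_nonneg fun y hy => (hSα s t y hy).1
  have hlim : ∀ s, Tendsto (fun t => sSup (S s t)) atTop (𝓝 0) := by
    intro s
    refine tendsto_order.2 ⟨fun a ha => Eventually.of_forall fun r => ha.trans_le (hSnn s r),
      fun a ha => ?_⟩
    rcases lt_or_ge s 0 with hs | hs
    · refine Eventually.of_forall fun t => (Real.sSup_le ?_ le_rfl).trans_lt ha
      rintro y (rfl | ⟨q, ξ, u, h1, h2, h3, h4⟩)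
      · exact le_rfl
      · exact absurd (h3.trans_lt hs) (norm_nonneg ξ).not_gt
    set c := α₁ (a / 2) with hc
    have hc0 : 0 < c := hα₁.1.pos (half_pos ha)
    have hσs : 0 ≤ σ s := hσ.nonneg hs
    have hrate : 0 < α₃ c (σ s) := (hα₃ (σ s) hσs).pos hc0
    filter_upwards [eventually_ge_atTop (α₂ s / (α₃ c (σ s) / 2))] with t ht
    refine (Real.sSup_le ?_ (half_pos ha).le).trans_lt (half_lt_self ha)
    rintro y (rfl | ⟨q, ξ, u, h1, h2, h3, h4, h5, h6, rfl⟩)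
    · exact (half_pos ha).le
    have hus : uNorm u ≤ ‖ξ‖ := by
      have h7 := (le_max_right (χ (uNorm u)) _).trans_lt (h6.trans_le (hsmall ξ u h4 h5 q h1 h6))
      exact ((hα₂.1.2.1.lt_iff_lt (uNorm_nonneg u) (norm_nonneg ξ)).1 h7).le
    have hR : max (σ ‖ξ‖) (σ (uNorm u)) ≤ σ s :=
      max_le (hσ.monotoneOn (norm_nonneg _) hs h3)
        (hσ.monotoneOn (uNorm_nonneg u) hs (hus.trans h3))
    have hR0 : 0 ≤ max (σ ‖ξ‖) (σ (uNorm u)) := le_max_of_le_left (hσ.nonneg (norm_nonneg _))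
    set c' := max c (χ (uNorm u)) with hc'
    have hcc' : c ≤ c' := le_max_left _ _
    have h7 := hest ξ u h4 h5 c' q (hc0.trans_le hcc') (le_max_right _ _) h1
    have h8 : α₃ c (σ s) ≤ α₃ c' (max (σ ‖ξ‖) (σ (uNorm u))) :=
      ((hα₃ (σ s) hσs).monotoneOn hc0.le (hc0.le.trans hcc') hcc').trans
        (hanti c' (hc0.le.trans hcc') hR0 hσs hR)
    have h9 : V ξ - α₃ c' (max (σ ‖ξ‖) (σ (uNorm u))) / 2 * q ≤ c' := by
      have h10 : α₂ s ≤ t * (α₃ c (σ s) / 2) := (div_le_iff₀ (half_pos hrate)).1 ht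
      have h11 : V ξ ≤ α₂ s :=
        (hbounds ξ).2.trans (hα₂.1.monotoneOn (norm_nonneg _) hs h3)
      have h12 : t * (α₃ c (σ s) / 2) ≤ q * (α₃ c (σ s) / 2) :=
        mul_le_mul_of_nonneg_right h2 (half_pos hrate).le
      have h13 : α₃ c (σ s) / 2 * q ≤ α₃ c' (max (σ ‖ξ‖) (σ (uNorm u))) / 2 * q :=
        mul_le_mul_of_nonneg_right (by linarith) h1
      linarith
    have h14 : V (x q ξ u) ≤ c' := h7.trans (max_le le_rfl h9)
    rcases le_max_iff.1 h14 with h15 | h15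
    · exact (hα₁.1.2.1.le_iff_le (norm_nonneg _) (half_pos ha).le).1 ((hbounds _).1.trans h15)
    · exact absurd (h15.trans (le_max_left _ _)) h6.not_ge
  have hzero : Tendsto (fun s => sSup (S s 0)) (𝓝[>] 0) (𝓝 0) := by
    refine tendsto_order.2 ⟨fun a ha => Eventually.of_forall fun r => ha.trans_le (hSnn r 0),
      fun a ha => ?_⟩
    filter_upwards [hα₂.1.tendsto_zero.eventually (gt_mem_nhds (hα₁.1.pos (half_pos ha)))] with s hs
    refine (Real.sSup_le (fun y hy => ?_) (half_pos ha).le).trans_lt (half_lt_self ha)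
    obtain ⟨hy0, rfl | hy1⟩ := hSα s 0 y hy
    · exact (half_pos ha).le
    · exact ((hα₁.1.2.1.lt_iff_lt hy0 (half_pos ha).le).1 (hy1.trans_lt hs)).le
  obtain ⟨β, hβ, hβle⟩ := exists_isClassKL_ge (φ := fun s t => sSup (S s t))
    (fun t s s' hs => csSup_le_csSup (hSbdd _ _) (hSne _ _) (hSsub hs le_rfl))
    (fun s t _ t' _ ht => csSup_le_csSup (hSbdd _ _) (hSne _ _) (hSsub le_rfl ht)) hSnn hlim hzero
  refine ⟨β, γ, hβ, hγ, fun ξ u hu hb t ht => ?_⟩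
  rcases le_or_gt (V (x t ξ u)) (g (uNorm u)) with hle | hlt
  · exact (hγle _ _ (uNorm_nonneg u) (norm_nonneg _) ((hbounds _).1.trans hle)).trans
      (le_max_right _ _)
  · refine le_trans ?_ ((hβle ‖ξ‖ (norm_nonneg _) t ht).trans (le_max_left _ _))
    exact le_csSup (hSbdd _ _)
      (mem_insert_of_mem _ ⟨t, ξ, u, ht, le_rfl, le_rfl, hu, hb, hlt, rfl⟩)

end Direct

/-- A BIBS system is IOS if and only if it admits an IOS-Lyapunov function. -/
theorem ios_iff_exists_iosLyapunov {n m p : ℕ}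
    (f : EuclideanSpace ℝ (Fin n) → EuclideanSpace ℝ (Fin m) → EuclideanSpace ℝ (Fin n))
    (h : EuclideanSpace ℝ (Fin n) → EuclideanSpace ℝ (Fin p))
    (x : ℝ → EuclideanSpace ℝ (Fin n) → (ℝ → EuclideanSpace ℝ (Fin m)) →
      EuclideanSpace ℝ (Fin n))
    (hf : LocallyLipschitz fun q : EuclideanSpace ℝ (Fin n) × EuclideanSpace ℝ (Fin m) =>
      f q.1 q.2)
    (hf0 : f 0 0 = 0)
    (hh : LocallyLipschitz h) (hh0 : h 0 = 0)
    (hBIBS : IsBIBS f x) :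
    IsIOS h x ↔ ∃ V : EuclideanSpace ℝ (Fin n) → ℝ, IsIOSLyapunov f h V := by
  exact ⟨fun hios => hios.exists_isIOSLyapunov hf hh hBIBS, fun ⟨_, hL⟩ => hL.isIOS hf hBIBS⟩
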